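/- arXiv:2203.08505 — 4 statements merged into one kernel-verified Lean document; each statement's English description precedes it below -/
import Mathlib

section
/- Let γ ∈ ℝ, q ≥ 3 fixed, and let K be a location-scale invariant kernel, not everywhere constant, with ||K||_a := (E[|K((Z_{q−j:q−1})_{j=1}^{q})|^a])^{1/a} finite for all a > 0 (Z's iid standard GP(γ), Z_{0:q−1} := 0). Let ℓ, m be integers with ℓ ≥ 2 and m ≥ ℓ + q, let Z_1,…,Z_{2m−ℓ} be iid standard GP(γ), Ξ_{ℓ,m} = K_m(Z_{[1:m]}) K_m(Z_{[(m−ℓ+1):(2m−ℓ)]}), and N_{ℓ,m} = Σ_{i=m−ℓ+1}^{m} 1{Z_i is in the top-q of Z_{[1:m]} or of Z_{[(m−ℓ+1):(2m−ℓ)]}}. Then for all a > 2, |E[Ξ_{ℓ,m}; N_{ℓ,m} ≥ 2]| ≤ ||K||_a² (ℓ(ℓ−1)/2)^{1−2/a} (2(2q²−q)/((m−1)(m−ℓ+1)))^{1−2/a}. -/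
open MeasureTheory ProbabilityTheory Filter Real Set Topology
open scoped ENNReal NNReal Classical

noncomputable section

/-- The `j`-th largest entry of the tuple `x` (`j = 0` gives the maximum, `j = 1` the
second largest, ...); `0` when `j` is out of range. -/
def descStat {m : ℕ} (x : Fin m → ℝ) (j : ℕ) : ℝ :=
  if h : j < m then (x ∘ Tuple.sort x) ⟨m - 1 - j, by omega⟩ else 0

/-- The kernel of degree `m` obtained from `K` by applying it to the top-`q`
(descending) order statistics: `K_m(x_1,…,x_m) = K(x_{m:m},…,x_{m−q+1:m})`. -/
def Km {q : ℕ} (K : (Fin q → ℝ) → ℝ) (m : ℕ) (x : Fin m → ℝ) : ℝ :=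
  K fun j => descStat x (j : ℕ)

/-- `K(a x_1 + b, …, a x_q + b) = K(x_1, …, x_q)` for all `a > 0`, `b ∈ ℝ`. -/
def LocScaleInvariant {q : ℕ} (K : (Fin q → ℝ) → ℝ) : Prop :=
  ∀ a b : ℝ, 0 < a → ∀ x : Fin q → ℝ, K (fun j => a * x j + b) = K x

/-- `h_γ(y) = (y^γ - 1)/γ`, interpreted as `log y` when `γ = 0`. -/
def hGamma (γ : ℝ) (y : ℝ) : ℝ := if γ = 0 then Real.log y else (y ^ γ - 1) / γ

lemma measurable_hGamma (γ : ℝ) : Measurable (hGamma γ) := by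
  unfold hGamma
  split_ifs
  · exact Real.measurable_log
  · fun_prop

/-- The uniform distribution on `(0,1)`. -/
def unif01 : Measure ℝ := volume.restrict (Set.Ioo (0:ℝ) 1)

instance : IsProbabilityMeasure unif01 := ⟨by simp [unif01]⟩

/-- The standard Pareto(1) distribution, with cdf `1 - 1/y` for `y ≥ 1`. -/
def pareto1 : Measure ℝ := ProbabilityTheory.paretoMeasure 1 1

instance : IsProbabilityMeasure pareto1 :=
  ProbabilityTheory.isProbabilityMeasure_paretoMeasure one_pos one_pos

/-- The standard generalized Pareto distribution `GP(γ)`: the law of `h_γ(Y)` for `Y`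
standard Pareto(1). -/
def gpMeasure (γ : ℝ) : Measure ℝ := pareto1.map (hGamma γ)

instance (γ : ℝ) : IsProbabilityMeasure (gpMeasure γ) :=
  Measure.isProbabilityMeasure_map (measurable_hGamma γ).aemeasurable

/-- The unit exponential distribution: the law of `-log U` for `U` uniform on `(0,1)`. -/
def expMeasure1 : Measure ℝ := unif01.map fun u => -Real.log u

instance : IsProbabilityMeasure expMeasure1 :=
  Measure.isProbabilityMeasure_map Real.measurable_log.neg.aemeasurable

/-- The Erlang(q) distribution: the law of the sum of `q` independent unit exponentials. -/
def erlangMeasure (q : ℕ) : Measure ℝ :=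
  (Measure.pi fun _ : Fin q => expMeasure1).map fun e => ∑ i, e i

instance (q : ℕ) : IsProbabilityMeasure (erlangMeasure q) :=
  Measure.isProbabilityMeasure_map
    (Finset.measurable_sum _ fun i _ => measurable_pi_apply i).aemeasurable

/-- The joint law of `r` iid `GP(γ)` random variables. -/
def gpPi (γ : ℝ) (r : ℕ) : Measure (Fin r → ℝ) := Measure.pi fun _ => gpMeasure γ

instance (γ : ℝ) (r : ℕ) : IsProbabilityMeasure (gpPi γ r) := by
  unfold gpPi; infer_instance

/-- The vector `(Z_{q-j:q-1})_{j=1}^{q}`: the descending order statistics of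
`z_1,…,z_{q-1}` with an extra last entry `Z_{0:q-1} := 0`. -/
def refVec {q : ℕ} (z : Fin (q-1) → ℝ) : Fin q → ℝ := fun j => descStat z (j : ℕ)

/-- `θ = E[K((Z_{q-j:q-1})_{j=1}^{q})]` for iid `GP(γ)` variables `Z_1,…,Z_{q-1}`. -/
def thetaK (γ : ℝ) {q : ℕ} (K : (Fin q → ℝ) → ℝ) : ℝ :=
  ∫ z, K (refVec z) ∂(gpPi γ (q-1))

/-- all moments of `K((Z_{q-j:q-1})_{j=1}^{q})` are finite. -/
def MomentCond (γ : ℝ) {q : ℕ} (K : (Fin q → ℝ) → ℝ) : Prop :=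
  ∀ p : ℝ, 0 < p →
    ∫⁻ z, ENNReal.ofReal (|K (refVec z)| ^ p) ∂(gpPi γ (q-1)) < ⊤

/-- The asymptotic variance
`σ²_K(γ) = ∫_0^∞ (E[K̄_{q+1}((Z_{q-j:q-1})_{j=1}^q, h_γ(S_q/x))])² dx`. -/
def sigmaSqK (γ : ℝ) {q : ℕ} (K : (Fin q → ℝ) → ℝ) : ℝ :=
  ∫ x in Set.Ioi (0:ℝ),
    (∫ zs : (Fin (q-1) → ℝ) × ℝ,
        (Km K (q+1) (Fin.snoc (refVec zs.1) (hGamma γ (zs.2 / x))) - thetaK γ K)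
      ∂((gpPi γ (q-1)).prod (erlangMeasure q))) ^ 2

/-- The U-statistic with kernel `K_m` evaluated on the sample `z`. -/
def UStat {q : ℕ} (K : (Fin q → ℝ) → ℝ) (m n : ℕ) (z : Fin n → ℝ) : ℝ :=
  ((n.choose m : ℝ))⁻¹ *
    ∑ I ∈ Finset.powersetCard m (Finset.univ : Finset (Fin n)),
      Km K I.card fun j => z (I.orderIsoOfFin rfl j).1

/-- Condition on the degree sequence: `m = o(n^{1-ε})` and `log n = o(m^{1-δ})`. -/
def DegreeCond (m : ℕ → ℕ) : Prop :=
  ∃ ε > (0:ℝ), ∃ δ > (0:ℝ),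
    Tendsto (fun n => (m n : ℝ) / (n : ℝ) ^ (1 - ε)) atTop (𝓝 0) ∧
    Tendsto (fun n : ℕ => Real.log n / (m n : ℝ) ^ (1 - δ)) atTop (𝓝 0)

/-- `ζ_{m,ℓ} = cov(K_m(Z_S), K_m(Z_{S'}))` for the blocks `S = [1:m]`,
`S' = [(m-ℓ+1):(2m-ℓ)]` (zero-indexed here), which overlap in `ℓ` indices. -/
def zetaCov {Ω : Type*} [MeasurableSpace Ω] (P : Measure Ω) {q : ℕ}
    (K : (Fin q → ℝ) → ℝ) (Z : ℕ → Ω → ℝ) (m ℓ : ℕ) : ℝ :=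
  (∫ ω, Km K m (fun i : Fin m => Z i ω) * Km K m (fun i : Fin m => Z (m - ℓ + i) ω) ∂P)
    - (∫ ω, Km K m (fun i : Fin m => Z i ω) ∂P)
      * (∫ ω, Km K m (fun i : Fin m => Z (m - ℓ + i) ω) ∂P)

/-- Convergence in distribution to a Gaussian, expressed via pointwise convergence of
the cumulative distribution functions (the Gaussian cdf being continuous). -/
def TendstoGaussian {Ω : Type*} [MeasurableSpace Ω] (P : Measure Ω)
    (T : ℕ → Ω → ℝ) (μ : ℝ) (v : ℝ≥0) : Prop :=
  ∀ x : ℝ, Tendsto (fun n => (P {ω | T n ω ≤ x}).toReal) atTop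
    (𝓝 ((gaussianReal μ v (Set.Iic x)).toReal))

/-- Convergence in probability to the constant `c`. -/
def TendstoInProb {Ω : Type*} [MeasurableSpace Ω] (P : Measure Ω)
    (T : ℕ → Ω → ℝ) (c : ℝ) : Prop :=
  ∀ ε : ℝ, 0 < ε → Tendsto (fun n => (P {ω | ε ≤ |T n ω - c|}).toReal) atTop (𝓝 0)


/-- `Z_i` is among the `q` largest of the values `(Z_a)_{a ∈ S}` (for `i ∈ S`):
fewer than `q` members of `S` are strictly larger. -/
def inTopQ (q : ℕ) {Ω : Type*} (Z : ℕ → Ω → ℝ) (S : Finset ℕ) (i : ℕ) (ω : Ω) : Prop :=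
  (S.filter fun a => Z i ω < Z a ω).card < q

/-- The counting variable `N_{ℓ,m}`: the number of `i ∈ [(m-ℓ+1):m]` such that `Z_i` is
in the top-`q` of `Z_{[1:m]}` or of `Z_{[(m-ℓ+1):(2m-ℓ)]}`. -/
def Ncount (q : ℕ) {Ω : Type*} (Z : ℕ → Ω → ℝ) (ℓ m : ℕ) (ω : Ω) : ℕ :=
  ((Finset.Icc (m - ℓ + 1) m).filter fun i =>
    inTopQ q Z (Finset.Icc 1 m) i ω ∨
      inTopQ q Z (Finset.Icc (m - ℓ + 1) (2 * m - ℓ)) i ω).card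

/-- The kernel `K_{|S|}` applied to the subsample `(Z_a)_{a ∈ S}`. -/
def KmOn {q : ℕ} (K : (Fin q → ℝ) → ℝ) {Ω : Type*} (Z : ℕ → Ω → ℝ)
    (S : Finset ℕ) (ω : Ω) : ℝ :=
  Km K S.card fun j => Z (S.orderIsoOfFin rfl j).1 ω

/-- `Ξ_{ℓ,m} = K_m(Z_{[1:m]}) K_m(Z_{[(m-ℓ+1):(2m-ℓ)]})`. -/
def XiRV {q : ℕ} (K : (Fin q → ℝ) → ℝ) {Ω : Type*} (Z : ℕ → Ω → ℝ)
    (ℓ m : ℕ) (ω : Ω) : ℝ :=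
  KmOn K Z (Finset.Icc 1 m) ω * KmOn K Z (Finset.Icc (m - ℓ + 1) (2 * m - ℓ)) ω

/-- `‖K‖_a = (E[|K((Z_{q-j:q-1})_{j=1}^q)|^a])^{1/a}`. -/
def normKa (γ : ℝ) {q : ℕ} (K : (Fin q → ℝ) → ℝ) (a : ℝ) : ℝ :=
  (∫ z, |K (refVec z)| ^ a ∂(gpPi γ (q-1))) ^ (1/a)

def cgt {ι : Type*} [Fintype ι] (x : ι → ℝ) (v : ℝ) : ℕ := ∑ i, if v < x i then 1 else 0
def cge {ι : Type*} [Fintype ι] (x : ι → ℝ) (v : ℝ) : ℕ := ∑ i, if v ≤ x i then 1 else 0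

lemma cge_le_cgt {ι : Type*} [Fintype ι] (x : ι → ℝ) {v w : ℝ} (h : v < w) :
    cge x w ≤ cgt x v := by
  unfold cge cgt
  refine Finset.sum_le_sum fun i _ => ?_
  split_ifs with h1 h2 <;> first | omega | (exfalso; linarith)

lemma cgt_anti {ι : Type*} [Fintype ι] (x : ι → ℝ) {v w : ℝ} (h : v ≤ w) :
    cgt x w ≤ cgt x v := by
  unfold cgt
  refine Finset.sum_le_sum fun i _ => ?_
  split_ifs with h1 h2 <;> first | omega | (exfalso; linarith)

lemma stat_unique {ι : Type*} [Fintype ι] (x : ι → ℝ) {r : ℕ} {v w : ℝ}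
    (h1 : cgt x v ≤ r) (h2 : r < cge x v) (h3 : cgt x w ≤ r) (h4 : r < cge x w) : v = w := by
  rcases lt_trichotomy v w with h | h | h
  · have := cge_le_cgt x h; omega
  · exact h
  · have := cge_le_cgt x h; omega

lemma descStat_spec {m : ℕ} (x : Fin m → ℝ) {r : ℕ} (hr : r < m) :
    cgt x (descStat x r) ≤ r ∧ r < cge x (descStat x r) := by
  have hmono : Monotone (x ∘ Tuple.sort x) := Tuple.monotone_sort x
  unfold descStat
  rw [dif_pos hr]
  set k : Fin m := ⟨m - 1 - r, by omega⟩ with hk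
  have e1 : cgt x ((x ∘ Tuple.sort x) k)
      = ∑ i, if (x ∘ Tuple.sort x) k < (x ∘ Tuple.sort x) i then 1 else 0 := by
    unfold cgt
    exact (Equiv.sum_comp (Tuple.sort x)
      (fun i => if (x ∘ Tuple.sort x) k < x i then 1 else 0)).symm
  have e2 : cge x ((x ∘ Tuple.sort x) k)
      = ∑ i, if (x ∘ Tuple.sort x) k ≤ (x ∘ Tuple.sort x) i then 1 else 0 := by
    unfold cge
    exact (Equiv.sum_comp (Tuple.sort x)
      (fun i => if (x ∘ Tuple.sort x) k ≤ x i then 1 else 0)).symm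
  rw [e1, e2]
  generalize x ∘ Tuple.sort x = y at *
  constructor
  · calc (∑ i, if y k < y i then 1 else 0) ≤ ∑ i, if k < i then 1 else 0 := by
          refine Finset.sum_le_sum fun i _ => ?_
          split_ifs with h1 h2
          · omega
          · exact absurd (hmono (not_lt.1 h2)) (not_le.2 h1)
          · omega
          · omega
      _ = (Finset.Ioi k).card := by
          rw [← Finset.card_filter]; congr 1; ext i; simp
      _ ≤ r := by rw [Fin.card_Ioi, hk]; simp; omega
  · calc r < (Finset.Ici k).card := by rw [Fin.card_Ici, hk]; simp; omega
      _ = ∑ i, if k ≤ i then 1 else 0 := by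
          rw [← Finset.card_filter]; congr 1; ext i; simp
      _ ≤ _ := by
          refine Finset.sum_le_sum fun i _ => ?_
          split_ifs with h1 h2
          · omega
          · exact absurd (hmono h1) h2
          · omega
          · omega

lemma lt_descStat_iff {m : ℕ} (x : Fin m → ℝ) {r : ℕ} (hr : r < m) (c : ℝ) :
    c < descStat x r ↔ r < cgt x c := by
  obtain ⟨h1, h2⟩ := descStat_spec x hr
  constructor
  · intro h; exact lt_of_lt_of_le h2 (cge_le_cgt x h)
  · intro h; by_contra h'
    have := cgt_anti x (not_lt.1 h'); omega

lemma measurable_cgt {ι : Type*} [Fintype ι] (c : ℝ) : Measurable fun x : ι → ℝ => cgt x c := by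
  unfold cgt
  refine Finset.measurable_sum _ fun i _ => ?_
  exact Measurable.ite (measurableSet_lt measurable_const (measurable_pi_apply i))
    measurable_const measurable_const

lemma measurable_descStat (m r : ℕ) : Measurable fun x : Fin m → ℝ => descStat x r := by
  by_cases hr : r < m
  · refine measurable_of_Ioi fun c => ?_
    have : (fun x : Fin m → ℝ => descStat x r) ⁻¹' Set.Ioi c = {x | r < cgt x c} := by
      ext x; simp [lt_descStat_iff x hr]
    rw [this]
    exact measurableSet_lt measurable_const (measurable_cgt c)
  · unfold descStat; simp [hr]

lemma measurable_Km {q : ℕ} {K : (Fin q → ℝ) → ℝ} (hK : Measurable K) (m : ℕ) :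
    Measurable (Km K m) :=
  hK.comp (measurable_pi_lambda _ fun j => measurable_descStat m j)

lemma measurable_refVec {q : ℕ} : Measurable (refVec (q := q)) :=
  measurable_pi_lambda _ fun j => measurable_descStat _ j

lemma cgt_affine {ι : Type*} [Fintype ι] (x : ι → ℝ) {a : ℝ} (ha : 0 < a) (b v : ℝ) :
    cgt (fun i => a * x i + b) (a * v + b) = cgt x v := by
  unfold cgt; simp [ha]

lemma cge_affine {ι : Type*} [Fintype ι] (x : ι → ℝ) {a : ℝ} (ha : 0 < a) (b v : ℝ) :
    cge (fun i => a * x i + b) (a * v + b) = cge x v := by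
  unfold cge; simp [ha]

lemma descStat_affine {m : ℕ} (x : Fin m → ℝ) {r : ℕ} (hr : r < m) {a : ℝ} (ha : 0 < a) (b : ℝ) :
    descStat (fun i => a * x i + b) r = a * descStat x r + b := by
  have h := descStat_spec (fun i => a * x i + b) hr
  have h' := descStat_spec x hr
  rw [← cgt_affine x ha b, ← cge_affine x ha b] at h'
  exact stat_unique _ h.1 h.2 h'.1 h'.2

/-- splitting of the top-q statistics -/
lemma descStat_split {n p s : ℕ} (e : (Fin p ⊕ (Unit ⊕ Fin s)) ≃ Fin n)
    (u : Fin p → ℝ) (t : ℝ) (w : Fin s → ℝ) (hu : ∀ i, t < u i) (hw : ∀ i, w i ≤ t)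
    {r : ℕ} (hr : r ≤ p) :
    descStat (fun i => Sum.elim u (Sum.elim (fun _ => t) w) (e.symm i)) r
      = if r < p then descStat u r else t := by
  have hn : r < n := by
    have := Fintype.card_congr e
    simp at this; omega
  have h := descStat_spec (fun i => Sum.elim u (Sum.elim (fun _ => t) w) (e.symm i)) hn
  have hgt : ∀ v, cgt (fun i => Sum.elim u (Sum.elim (fun _ => t) w) (e.symm i)) v
      = cgt u v + ((if v < t then 1 else 0) + cgt w v) := by
    intro v
    unfold cgt
    rw [Equiv.sum_comp e.symm
      (fun i => if v < Sum.elim u (Sum.elim (fun _ => t) w) i then 1 else 0)]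
    rw [Fintype.sum_sum_type, Fintype.sum_sum_type]
    simp only [Sum.elim_inl, Sum.elim_inr, Finset.univ_unique, Finset.sum_singleton]
    rfl
  have hge : ∀ v, cge (fun i => Sum.elim u (Sum.elim (fun _ => t) w) (e.symm i)) v
      = cge u v + ((if v ≤ t then 1 else 0) + cge w v) := by
    intro v
    unfold cge
    rw [Equiv.sum_comp e.symm
      (fun i => if v ≤ Sum.elim u (Sum.elim (fun _ => t) w) i then 1 else 0)]
    rw [Fintype.sum_sum_type, Fintype.sum_sum_type]
    simp only [Sum.elim_inl, Sum.elim_inr, Finset.univ_unique, Finset.sum_singleton]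
    rfl
  refine stat_unique _ h.1 h.2 ?_ ?_
  · split_ifs with hp
    · have h' := descStat_spec u hp
      have ht : t < descStat u r := by
        unfold descStat; rw [dif_pos hp]; exact hu _
      rw [hgt, if_neg (by linarith)]
      have : cgt w (descStat u r) = 0 := by
        unfold cgt
        refine Finset.sum_eq_zero fun i _ => if_neg ?_
        have := hw i; linarith
      omega
    · rw [hgt, if_neg (by linarith)]
      have : cgt w t = 0 := by
        unfold cgt
        exact Finset.sum_eq_zero fun i _ => if_neg (not_lt.2 (hw i))
      have h2 : cgt u t ≤ p := by
        unfold cgt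
        rw [← Finset.card_filter]
        exact (Finset.card_le_univ _).trans (by simp)
      omega
  · split_ifs with hp
    · have h' := descStat_spec u hp
      rw [hge]; omega
    · rw [hge, if_pos le_rfl]
      have h2 : cge u t = p := by
        unfold cge
        simp [fun i => (hu i).le]
      omega

lemma pareto1_Ioi (s : ℝ) : pareto1 (Set.Ioi s) = ENNReal.ofReal (1 / max s 1) := by
  have h1 : ∀ s : ℝ, 1 ≤ s → pareto1 (Set.Ioi s) = ENNReal.ofReal (1 / s) := by
    intro s hs
    have hs0 : 0 < s := by linarith
    unfold pareto1 paretoMeasure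
    rw [withDensity_apply _ measurableSet_Ioi]
    have : ∫⁻ x in Set.Ioi s, paretoPDF 1 1 x
        = ∫⁻ x in Set.Ioi s, ENNReal.ofReal (x ^ (-2 : ℝ)) := by
      refine setLIntegral_congr_fun measurableSet_Ioi fun x (hx : s < x) => ?_
      rw [paretoPDF_of_le (by linarith)]
      norm_num
    rw [this, ← ofReal_integral_eq_lintegral_ofReal, integral_Ioi_rpow_of_lt (by norm_num) hs0]
    · norm_num [Real.rpow_neg_one]
    · exact integrableOn_Ioi_rpow_of_lt (by norm_num) hs0
    · refine (ae_restrict_iff' measurableSet_Ioi).2 (ae_of_all _ fun x (hx : s < x) => ?_)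
      simp only [Pi.zero_apply]
      positivity [hs0.trans hx]
  rcases le_total 1 s with h | h
  · rw [max_eq_left h, h1 s h]
  · rw [max_eq_right h]
    refine le_antisymm (by simpa using prob_le_one) ?_
    rw [← h1 1 le_rfl]
    exact measure_mono (Set.Ioi_subset_Ioi h)

lemma pareto1_noAtoms (x : ℝ) : pareto1 {x} = 0 := by
  unfold pareto1 paretoMeasure
  exact withDensity_absolutelyContinuous _ _ (by simp)

lemma pareto1_ae : ∀ᵐ x ∂pareto1, 1 ≤ x := by
  have h : pareto1 (Set.Ioi 1)ᶜ = 0 := by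
    rw [prob_compl_eq_zero_iff measurableSet_Ioi, pareto1_Ioi]; simp
  filter_upwards [compl_mem_ae_iff.2 h] with x hx
  simp at hx; exact hx.le

lemma pareto1_restrict {t : ℝ} (ht : 1 ≤ t) :
    pareto1.restrict (Set.Ioi t) = ENNReal.ofReal (1 / t) • pareto1.map (fun x => t * x) := by
  have ht0 : 0 < t := by linarith
  have hm : Measurable fun x : ℝ => t * x := measurable_const_mul t
  have := Measure.isProbabilityMeasure_map (μ := pareto1) hm.aemeasurable
  refine MeasureTheory.ext_of_generate_finite (Set.range Set.Ioi) ?_ isPiSystem_Ioi ?_ ?_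
  · exact borel_eq_generateFrom_Ioi ℝ ▸ (BorelSpace.measurable_eq (α := ℝ))
  · rintro _ ⟨s, rfl⟩
    rw [Measure.restrict_apply measurableSet_Ioi, Measure.smul_apply,
      Measure.map_apply hm measurableSet_Ioi, Set.Ioi_inter_Ioi]
    have : (fun x : ℝ => t * x) ⁻¹' Set.Ioi s = Set.Ioi (s / t) := by
      ext x; simp [div_lt_iff₀' ht0]
    rw [this, pareto1_Ioi, pareto1_Ioi, smul_eq_mul, ← ENNReal.ofReal_mul (by positivity)]
    congr 1
    rw [one_div_mul_one_div, mul_max_of_nonneg _ _ ht0.le, mul_div_cancel₀ _ ht0.ne', mul_one]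
    congr 1
    exact max_eq_left (ht.trans (le_max_right _ _))
  · simp [pareto1_Ioi, max_eq_left ht, Measure.map_apply hm]

lemma hGamma_scale (γ : ℝ) {t u : ℝ} (ht : 0 < t) (hu : 0 < u) :
    hGamma γ (t * u) = t ^ γ * hGamma γ u + hGamma γ t := by
  unfold hGamma
  split_ifs with h
  · rw [h, Real.rpow_zero, Real.log_mul ht.ne' hu.ne']; ring
  · rw [Real.mul_rpow ht.le hu.le]; field_simp; ring

lemma hGamma_pos (γ : ℝ) {u : ℝ} (hu : 1 < u) : 0 < hGamma γ u := by
  unfold hGamma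
  split_ifs with h
  · exact Real.log_pos hu
  · rcases lt_or_gt_of_ne h with h | h
    · have := Real.rpow_lt_one_of_one_lt_of_neg hu h
      exact div_pos_of_neg_of_neg (by linarith) h
    · have := Real.one_lt_rpow hu h
      exact div_pos (by linarith) h

lemma hGamma_lt (γ : ℝ) {t u : ℝ} (ht : 0 < t) (htu : t < u) : hGamma γ t < hGamma γ u := by
  have h := hGamma_scale γ ht (div_pos (ht.trans htu) ht)
  rw [mul_div_cancel₀ _ ht.ne'] at h
  have h2 := hGamma_pos γ ((one_lt_div ht).2 htu)
  rw [h]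
  have := mul_pos (Real.rpow_pos_of_pos ht γ) h2
  linarith

lemma hGamma_le (γ : ℝ) {t u : ℝ} (ht : 0 < t) (htu : t ≤ u) : hGamma γ t ≤ hGamma γ u := by
  rcases htu.lt_or_eq with h | h
  · exact (hGamma_lt γ ht h).le
  · rw [h]

lemma gp_noAtoms (γ z : ℝ) : gpMeasure γ {z} = 0 := by
  unfold gpMeasure
  rw [Measure.map_apply (measurable_hGamma γ) (measurableSet_singleton z)]
  by_cases h : ∃ x, 1 ≤ x ∧ hGamma γ x = z
  · obtain ⟨x, hx, rfl⟩ := h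
    have h0 : ∀ᵐ y ∂pareto1, y ≠ x := by
      rw [ae_iff]; simpa using pareto1_noAtoms x
    have : ∀ᵐ y ∂pareto1, hGamma γ y ≠ hGamma γ x := by
      filter_upwards [h0, pareto1_ae] with y hy1 hy2
      rcases lt_or_gt_of_ne hy1 with h | h
      · exact (hGamma_lt γ (by linarith) h).ne
      · exact (hGamma_lt γ (by linarith) h).ne'
    rw [ae_iff] at this
    exact (by simpa using this : pareto1 {a | hGamma γ a = hGamma γ x} = 0)
  · have : ∀ᵐ y ∂pareto1, hGamma γ y ≠ z := by
      filter_upwards [pareto1_ae] with y hy2 hy3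
      exact h ⟨y, hy2, hy3⟩
    rw [ae_iff] at this
    exact (by simpa using this : pareto1 {a | hGamma γ a = z} = 0)

lemma pi_perm {ι κ : Type*} [Fintype ι] [Fintype κ] (μ : Measure ℝ) [IsProbabilityMeasure μ]
    (e : ι ≃ κ) :
    (Measure.pi fun _ : κ => μ).map (fun x i => x (e i)) = Measure.pi fun _ : ι => μ := by
  symm
  refine Measure.pi_eq fun s hs => ?_
  have hm : Measurable fun (x : κ → ℝ) (i : ι) => x (e i) :=
    measurable_pi_lambda _ fun i => measurable_pi_apply _
  rw [Measure.map_apply hm (MeasurableSet.univ_pi hs)]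
  have : (fun (x : κ → ℝ) (i : ι) => x (e i)) ⁻¹' Set.univ.pi s
      = Set.univ.pi fun k => s (e.symm k) := by
    ext x
    simp only [Set.mem_preimage, Set.mem_pi, Set.mem_univ, true_imp_iff]
    constructor
    · intro h k; simpa using h (e.symm k)
    · intro h i; simpa using h (e i)
  rw [this, Measure.pi_pi, Equiv.prod_comp e.symm (fun i => μ (s i))]

lemma pi_split {ι : Type*} [Fintype ι] {p s : ℕ} (μ : Measure ℝ) [IsProbabilityMeasure μ]
    (e : (Fin p ⊕ (Unit ⊕ Fin s)) ≃ ι) :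
    ((Measure.pi fun _ : Fin p => μ).prod (μ.prod (Measure.pi fun _ : Fin s => μ))).map
      (fun a i => Sum.elim a.1 (Sum.elim (fun _ => a.2.1) a.2.2) (e.symm i))
      = Measure.pi fun _ : ι => μ := by
  symm
  refine Measure.pi_eq fun B hB => ?_
  have hm : Measurable fun (a : (Fin p → ℝ) × (ℝ × (Fin s → ℝ))) (i : ι) =>
      (Sum.elim a.1 (Sum.elim (fun _ => a.2.1) a.2.2) (e.symm i) : ℝ) := by
    refine measurable_pi_lambda _ fun i => ?_
    rcases e.symm i with j | j | j <;> simp only [Sum.elim_inl, Sum.elim_inr] <;> fun_prop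
  rw [Measure.map_apply hm (MeasurableSet.univ_pi hB)]
  have : (fun (a : (Fin p → ℝ) × (ℝ × (Fin s → ℝ))) (i : ι) =>
      (Sum.elim a.1 (Sum.elim (fun _ => a.2.1) a.2.2) (e.symm i) : ℝ)) ⁻¹' Set.univ.pi B
      = (Set.univ.pi fun k => B (e (Sum.inl k))) ×ˢ
        (B (e (Sum.inr (Sum.inl ()))) ×ˢ (Set.univ.pi fun k => B (e (Sum.inr (Sum.inr k))))) := by
    ext x
    simp only [Set.mem_preimage, Set.mem_pi, Set.mem_univ, true_imp_iff, Set.mem_prod]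
    constructor
    · intro h
      exact ⟨fun k => by simpa using h (e (Sum.inl k)),
        by simpa using h (e (Sum.inr (Sum.inl ()))),
        fun k => by simpa using h (e (Sum.inr (Sum.inr k)))⟩
    · rintro ⟨h1, h2, h3⟩ i
      obtain ⟨k, rfl⟩ := e.surjective i
      rcases k with k | k | k
      · simpa using h1 k
      · simpa using h2
      · simpa using h3 k
  rw [this, Measure.prod_prod, Measure.prod_prod, Measure.pi_pi, Measure.pi_pi,
    ← Equiv.prod_comp e (fun i => μ (B i)), Fintype.prod_sum_type, Fintype.prod_sum_type]
  simp

lemma pi_ae_inj {ι : Type*} [Fintype ι] (μ : Measure ℝ) [IsProbabilityMeasure μ]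
    (hμ : ∀ z, μ {z} = 0) :
    ∀ᵐ x ∂(Measure.pi fun _ : ι => μ), Function.Injective x := by
  have key : ∀ i j : ι, i ≠ j → ∀ᵐ x ∂(Measure.pi fun _ : ι => μ), x i ≠ x j := by
    intro i j hij
    have hI : iIndepFun (fun (i : ι) (x : ι → ℝ) => x i) (Measure.pi fun _ : ι => μ) :=
      iIndepFun_pi (X := fun _ => id) (fun _ => aemeasurable_id)
    have h2 := hI.indepFun hij
    rw [indepFun_iff_map_prod_eq_prod_map_map (measurable_pi_apply i).aemeasurable
      (measurable_pi_apply j).aemeasurable] at h2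
    have hi : ∀ k : ι, (Measure.pi fun _ : ι => μ).map (fun x => x k) = μ := fun k =>
      (measurePreserving_eval (fun _ : ι => μ) k).map_eq
    rw [hi, hi] at h2
    have hd : MeasurableSet {a : ℝ × ℝ | a.1 = a.2} :=
      measurableSet_eq_fun measurable_fst measurable_snd
    have h3 : (μ.prod μ) {a : ℝ × ℝ | a.1 = a.2} = 0 := by
      rw [Measure.measure_prod_null hd]
      refine ae_of_all _ fun x => ?_
      have : Prod.mk x ⁻¹' {a : ℝ × ℝ | a.1 = a.2} = {x} := by ext y; simp [eq_comm]
      simp [this, hμ]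
    rw [← h2, Measure.map_apply (by fun_prop) hd] at h3
    rw [ae_iff]
    simpa using h3
  have : ∀ᵐ x ∂(Measure.pi fun _ : ι => μ), ∀ i j : ι, i ≠ j → x i ≠ x j := by
    rw [ae_all_iff]; intro i; rw [ae_all_iff]; intro j
    by_cases h : i = j
    · simp [h]
    · filter_upwards [key i j h] with x hx _ using hx
  filter_upwards [this] with x hx i j hij
  by_contra h
  exact hx i j h hij

lemma pi_smul_aux {p : ℕ} (μ : Measure ℝ) [IsProbabilityMeasure μ] (r : ℝ≥0∞) (hr : r ≠ ⊤) :
    (Measure.pi fun _ : Fin p => r • μ) = r ^ p • Measure.pi fun _ : Fin p => μ := by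
  have : IsFiniteMeasure (r • μ) := ⟨by simp [hr.lt_top]⟩
  refine Measure.pi_eq fun s hs => ?_
  simp [Measure.pi_pi, Finset.prod_mul_distrib]

lemma inner_pareto {p : ℕ} {t : ℝ} (ht : 1 ≤ t) (G : (Fin p → ℝ) → ℝ≥0∞) (hG : Measurable G) :
    ∫⁻ u, (Set.univ.pi fun _ => Set.Ioi t).indicator G u ∂(Measure.pi fun _ : Fin p => pareto1)
      = ENNReal.ofReal (1 / t) ^ p *
        ∫⁻ u, G (fun i => t * u i) ∂(Measure.pi fun _ : Fin p => pareto1) := by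
  have hm : Measurable fun x : ℝ => t * x := measurable_const_mul t
  have := Measure.isProbabilityMeasure_map (μ := pareto1) hm.aemeasurable
  rw [lintegral_indicator (MeasurableSet.univ_pi fun _ => measurableSet_Ioi),
    Measure.restrict_pi_pi, pareto1_restrict ht, pi_smul_aux _ _ ENNReal.ofReal_ne_top,
    lintegral_smul_measure, ← Measure.pi_map_pi (fun _ => hm.aemeasurable), lintegral_map hG]
  · rfl
  · exact measurable_pi_lambda _ fun i => hm.comp (measurable_pi_apply i)

def evE {n p s : ℕ} (e : (Fin p ⊕ (Unit ⊕ Fin s)) ≃ Fin n) : Set (Fin n → ℝ) :=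
  {x | (∀ i, x (e (Sum.inr (Sum.inl ()))) < x (e (Sum.inl i))) ∧
    ∀ k, x (e (Sum.inr (Sum.inr k))) ≤ x (e (Sum.inr (Sum.inl ())))}

lemma measurableSet_evE {n p s : ℕ} (e : (Fin p ⊕ (Unit ⊕ Fin s)) ≃ Fin n) :
    MeasurableSet (evE e) := by
  unfold evE
  rw [Set.ofPred_and, Set.ofPred_forall, Set.ofPred_forall]
  exact (MeasurableSet.iInter fun i => measurableSet_lt (by fun_prop)
    (by fun_prop)).inter (MeasurableSet.iInter fun i =>
      measurableSet_le (by fun_prop) (by fun_prop))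

def topq (γ : ℝ) (q : ℕ) {n : ℕ} (x : Fin n → ℝ) : Fin q → ℝ :=
  fun j => descStat (fun i => hGamma γ (x i)) (j : ℕ)

lemma measurable_topq (γ : ℝ) (q n : ℕ) : Measurable (topq γ q (n := n)) :=
  measurable_pi_lambda _ fun j => (measurable_descStat n j).comp
    (measurable_pi_lambda _ fun i => (measurable_hGamma γ).comp (measurable_pi_apply i))

lemma piece (γ : ℝ) {n q s : ℕ} (hq : 1 ≤ q) (e : (Fin (q-1) ⊕ (Unit ⊕ Fin s)) ≃ Fin n) :
    ∃ M : ℝ≥0∞, ∀ F : (Fin q → ℝ) → ℝ≥0∞, Measurable F →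
      (∀ a b : ℝ, 0 < a → ∀ x, F (fun j => a * x j + b) = F x) →
      ∫⁻ x, (evE e).indicator (fun x => F (topq γ q x)) x ∂(Measure.pi fun _ : Fin n => pareto1)
        = M * ∫⁻ u, F (topq γ q u) ∂(Measure.pi fun _ : Fin (q-1) => pareto1) := by
  refine ⟨∫⁻ y, (if ∀ k, y.2 k ≤ y.1 then ENNReal.ofReal (1 / y.1) ^ (q-1) else 0)
    ∂(pareto1.prod (Measure.pi fun _ : Fin s => pareto1)), fun F hF hinv => ?_⟩
  have hm : Measurable fun (a : (Fin (q-1) → ℝ) × (ℝ × (Fin s → ℝ))) (i : Fin n) =>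
      (Sum.elim a.1 (Sum.elim (fun _ => a.2.1) a.2.2) (e.symm i) : ℝ) := by
    refine measurable_pi_lambda _ fun i => ?_
    rcases e.symm i with j | j | j <;> simp only [Sum.elim_inl, Sum.elim_inr] <;> fun_prop
  have hF' : Measurable ((evE e).indicator (fun x => F (topq γ q x))) :=
    (hF.comp (measurable_topq γ q n)).indicator (measurableSet_evE e)
  have hc : Measurable fun (a : (Fin (q-1) → ℝ) × (ℝ × (Fin s → ℝ))) =>
      (evE e).indicator (fun x => F (topq γ q x))
        (fun i => Sum.elim a.1 (Sum.elim (fun _ => a.2.1) a.2.2) (e.symm i)) := hF'.comp hm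
  rw [← pi_split pareto1 e, lintegral_map hF' hm,
    lintegral_prod_symm _ hc.aemeasurable]
  have hS : MeasurableSet {y : ℝ × (Fin s → ℝ) | ∀ k, y.2 k ≤ y.1} := by
    rw [Set.ofPred_forall]
    exact MeasurableSet.iInter fun k => measurableSet_le (by fun_prop) (by fun_prop)
  rw [← lintegral_mul_const]
  swap
  · exact Measurable.ite hS (by fun_prop) measurable_const
  have hw1 : ∀ᵐ w ∂(Measure.pi fun _ : Fin s => pareto1), ∀ k, 1 ≤ w k := by
    rw [ae_all_iff]; intro k
    exact Measure.tendsto_eval_ae_ae.eventually pareto1_ae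
  have hu1 : ∀ᵐ w ∂(Measure.pi fun _ : Fin (q-1) => pareto1), ∀ k, 1 ≤ w k := by
    rw [ae_all_iff]; intro k
    exact Measure.tendsto_eval_ae_ae.eventually pareto1_ae
  have ha1 : ∀ᵐ y ∂(pareto1.prod (Measure.pi fun _ : Fin s => pareto1)), 1 ≤ y.1 :=
    Measure.quasiMeasurePreserving_fst.ae pareto1_ae
  have ha2 : ∀ᵐ y ∂(pareto1.prod (Measure.pi fun _ : Fin s => pareto1)), ∀ k, 1 ≤ y.2 k :=
    Measure.quasiMeasurePreserving_snd.ae hw1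
  refine lintegral_congr_ae ?_
  filter_upwards [ha1, ha2] with y hy1 hy2
  obtain ⟨t, w⟩ := y
  simp only at hy1 hy2 ⊢
  have ht0 : 0 < t := by linarith
  set G : (Fin (q-1) → ℝ) → ℝ≥0∞ := fun u => F (fun j : Fin q =>
    if (j : ℕ) < q - 1 then descStat (fun i => hGamma γ (u i)) j else hGamma γ t) with hGdef
  have hGm : Measurable G := by
    refine hF.comp (measurable_pi_lambda _ fun j => ?_)
    split_ifs
    · exact (measurable_descStat _ j).comp
        (measurable_pi_lambda _ fun i => (measurable_hGamma γ).comp (measurable_pi_apply i))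
    · exact measurable_const
  split_ifs with hwt
  · have e1 : ∀ u : Fin (q-1) → ℝ, (evE e).indicator (fun x => F (topq γ q x))
        (fun i => Sum.elim u (Sum.elim (fun _ => t) w) (e.symm i))
        = (Set.univ.pi fun _ => Set.Ioi t).indicator G u := by
      intro u
      by_cases hu : ∀ i, t < u i
      · rw [Set.indicator_of_mem, Set.indicator_of_mem]
        · rw [hGdef]
          simp only
          congr 1
          funext j
          unfold topq
          have hsp := descStat_split e (fun i => hGamma γ (u i)) (hGamma γ t)
            (fun k => hGamma γ (w k)) (fun i => hGamma_lt γ ht0 (hu i))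
            (fun k => hGamma_le γ (by linarith [hy2 k]) (hwt k)) (r := (j : ℕ)) (by omega)
          rw [← hsp]
          congr 1
          funext i
          beta_reduce
          rcases e.symm i with k | k | k <;> rfl
        · simpa using hu
        · unfold evE; simpa using ⟨hu, hwt⟩
      · rw [Set.indicator_of_notMem, Set.indicator_of_notMem]
        · simpa using hu
        · unfold evE
          intro h
          apply hu
          simpa using h.1
    rw [lintegral_congr e1, inner_pareto hy1 G hGm]
    congr 1
    refine lintegral_congr_ae ?_
    filter_upwards [hu1] with u hu
    rw [hGdef, ← hinv (t ^ γ) (hGamma γ t) (Real.rpow_pos_of_pos ht0 γ)]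
    simp only
    congr 1
    funext j
    unfold topq
    split_ifs with hj
    · rw [← descStat_affine _ hj (Real.rpow_pos_of_pos ht0 γ)]
      congr 1
      funext i
      exact hGamma_scale γ ht0 (by linarith [hu i])
    · simp [descStat, hj]
  · rw [zero_mul]
    refine (lintegral_congr fun u => ?_).trans lintegral_zero
    rw [Set.indicator_of_notMem]
    unfold evE
    intro h
    apply hwt
    simpa using h.2

lemma exists_e {n p : ℕ} (j : Fin n) (I : Finset (Fin n)) (hI : I.card = p) (hj : j ∉ I) :
    ∃ e : (Fin p ⊕ (Unit ⊕ Fin (n - (p + 1)))) ≃ Fin n,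
      evE e = {x | (Finset.univ.filter fun i => x j < x i) = I} := by
  have hcard : (insert j I).card = p + 1 := by rw [Finset.card_insert_of_notMem hj, hI]
  have hle : p + 1 ≤ n := by
    rw [← hcard]; exact (Finset.card_le_univ _).trans (by simp)
  have hR : ((insert j I)ᶜ).card = n - (p + 1) := by rw [Finset.card_compl, hcard]; simp
  let e1 := (I.equivFinOfCardEq hI).symm
  let e2 := (((insert j I)ᶜ).equivFinOfCardEq hR).symm
  let f : (Fin p ⊕ (Unit ⊕ Fin (n - (p + 1)))) → Fin n :=
    Sum.elim (fun a => (e1 a : Fin n)) (Sum.elim (fun _ => j) (fun b => (e2 b : Fin n)))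
  have h1 : ∀ a, (e1 a : Fin n) ∈ I := fun a => (e1 a).2
  have h2 : ∀ b, (e2 b : Fin n) ≠ j ∧ (e2 b : Fin n) ∉ I := fun b => by
    have := (e2 b).2
    simpa using this
  have hinj : Function.Injective f := by
    rintro (a | a | a) (b | b | b) h <;> simp only [f, Sum.elim_inl, Sum.elim_inr] at h
    · rw [e1.injective (Subtype.ext h)]
    · exact absurd (h ▸ h1 a) hj
    · exact absurd (h ▸ h1 a) (h2 b).2
    · exact absurd (h ▸ h1 b) hj
    · rfl
    · exact absurd h.symm (h2 b).1
    · exact absurd (h ▸ h1 b) (h2 a).2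
    · exact absurd h (h2 a).1
    · rw [e2.injective (Subtype.ext h)]
  have hbij : Function.Bijective f := by
    rw [Fintype.bijective_iff_injective_and_card]
    refine ⟨hinj, ?_⟩
    simp; omega
  refine ⟨Equiv.ofBijective f hbij, ?_⟩
  ext x
  simp only [evE, Set.mem_ofPred_eq, Equiv.ofBijective_apply, f, Sum.elim_inl, Sum.elim_inr]
  constructor
  · rintro ⟨ha, hb⟩
    ext i
    simp only [Finset.mem_filter, Finset.mem_univ, true_and]
    constructor
    · intro hi
      by_contra hiI
      have hm : i ∈ (insert j I)ᶜ := by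
        simp only [Finset.mem_compl, Finset.mem_insert, not_or]
        refine ⟨?_, hiI⟩
        rintro rfl; exact lt_irrefl _ hi
      have := hb (e2.symm ⟨i, hm⟩)
      simp at this
      linarith
    · intro hi
      have := ha (e1.symm ⟨i, hi⟩)
      simpa using this
  · intro h
    have hiff : ∀ i, i ∈ I ↔ x j < x i := by
      intro i; rw [← h]; simp
    exact ⟨fun a => (hiff _).1 (h1 a), fun b => not_lt.1 fun hb => (h2 b).2 ((hiff _).2 hb)⟩

lemma total_aux (γ : ℝ) {n q : ℕ} (hq : 1 ≤ q) (hn : q ≤ n) :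
    ∃ M : ℝ≥0∞, ∀ F : (Fin q → ℝ) → ℝ≥0∞, Measurable F →
      (∀ a b : ℝ, 0 < a → ∀ x, F (fun j => a * x j + b) = F x) →
      ∫⁻ x, F (topq γ q x) ∂(Measure.pi fun _ : Fin n => pareto1)
        = M * ∫⁻ u, F (topq γ q u) ∂(Measure.pi fun _ : Fin (q-1) => pareto1) := by
  let T : Finset (Fin n × Finset (Fin n)) :=
    (Finset.univ ×ˢ Finset.powersetCard (q-1) Finset.univ).filter fun a => a.1 ∉ a.2
  let E : Fin n × Finset (Fin n) → Set (Fin n → ℝ) := fun a =>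
    {x | (Finset.univ.filter fun i => x a.1 < x i) = a.2}
  have hT : ∀ a ∈ T, a.2.card = q - 1 ∧ a.1 ∉ a.2 := by
    intro a ha
    simpa [T, Finset.mem_powersetCard] using ha
  have hpiece : ∀ a : Fin n × Finset (Fin n), ∃ M : ℝ≥0∞, a ∈ T → MeasurableSet (E a) ∧
      ∀ F : (Fin q → ℝ) → ℝ≥0∞, Measurable F →
      (∀ a b : ℝ, 0 < a → ∀ x, F (fun j => a * x j + b) = F x) →
      ∫⁻ x, (E a).indicator (fun x => F (topq γ q x)) x ∂(Measure.pi fun _ : Fin n => pareto1)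
        = M * ∫⁻ u, F (topq γ q u) ∂(Measure.pi fun _ : Fin (q-1) => pareto1) := by
    intro a
    by_cases ha : a ∈ T
    · obtain ⟨e, he⟩ := exists_e a.1 a.2 (hT a ha).1 (hT a ha).2
      obtain ⟨M, hM⟩ := piece γ hq e
      rw [he] at hM
      refine ⟨M, fun _ => ⟨?_, hM⟩⟩
      have := measurableSet_evE e
      rwa [he] at this
    · exact ⟨0, fun h => absurd h ha⟩
  choose M hM using hpiece
  refine ⟨∑ a ∈ T, M a, fun F hF hinv => ?_⟩
  have hsum : ∀ᵐ x ∂(Measure.pi fun _ : Fin n => pareto1),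
      F (topq γ q x) = ∑ a ∈ T, (E a).indicator (fun x => F (topq γ q x)) x := by
    filter_upwards [pi_ae_inj (ι := Fin n) pareto1 pareto1_noAtoms] with x hx
    have hlt : ∀ i, (Finset.univ.filter fun k => x i < x k).card < n := by
      intro i
      have : (Finset.univ.filter fun k => x i < x k) ⊂ Finset.univ := by
        rw [Finset.filter_ssubset]
        exact ⟨i, Finset.mem_univ _, lt_irrefl _⟩
      simpa using Finset.card_lt_card this
    let rk : Fin n → Fin n := fun i => ⟨_, hlt i⟩
    have hmono : ∀ i k, x i < x k → rk k < rk i := by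
      intro i k hik
      change (Finset.univ.filter fun l => x k < x l).card
        < (Finset.univ.filter fun l => x i < x l).card
      refine Finset.card_lt_card ?_
      rw [Finset.ssubset_iff_of_subset]
      · exact ⟨k, by simpa using hik, by simp⟩
      · intro l hl
        simp only [Finset.mem_filter, Finset.mem_univ, true_and] at hl ⊢
        exact hik.trans hl
    have hinj : Function.Injective rk := by
      intro i k hik
      by_contra hne
      rcases lt_or_gt_of_ne (hx.ne hne) with h | h
      · exact absurd hik (hmono _ _ h).ne'
      · exact absurd hik (hmono _ _ h).ne
    obtain ⟨j, hj⟩ := (Finite.injective_iff_surjective.1 hinj) ⟨q - 1, by omega⟩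
    rw [Finset.sum_eq_single (j, Finset.univ.filter fun k => x j < x k)]
    · rw [Set.indicator_of_mem]
      simp [E]
    · rintro ⟨j', I'⟩ ha hne
      rw [Set.indicator_of_notMem]
      intro hmem
      have hmem' : (Finset.univ.filter fun k => x j' < x k) = I' := hmem
      apply hne
      have h3 : rk j' = rk j := by
        rw [hj]
        apply Fin.ext
        simp only [rk]
        rw [hmem']
        exact (hT _ ha).1
      have := hinj h3
      subst this
      rw [hmem']
    · intro hnot
      exfalso
      apply hnot
      have : (Finset.univ.filter fun k => x j < x k).card = q - 1 := congrArg Fin.val hj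
      simp [T, Finset.mem_powersetCard, this]
  rw [lintegral_congr_ae hsum, lintegral_finsetSum', Finset.sum_mul]
  · exact Finset.sum_congr rfl fun a ha => (hM a ha).2 F hF hinv
  · intro a ha
    exact ((hF.comp (measurable_topq γ q n)).indicator (hM a ha).1).aemeasurable

lemma total (γ : ℝ) {n q : ℕ} (hq : 1 ≤ q) (hn : q ≤ n)
    (F : (Fin q → ℝ) → ℝ≥0∞) (hF : Measurable F)
    (hinv : ∀ a b : ℝ, 0 < a → ∀ x, F (fun j => a * x j + b) = F x) :
    ∫⁻ z, F (fun j => descStat z (j : ℕ)) ∂(gpPi γ n)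
      = ∫⁻ z, F (refVec z) ∂(gpPi γ (q-1)) := by
  have hgp : ∀ r, gpPi γ r = (Measure.pi fun _ : Fin r => pareto1).map
      (fun x i => hGamma γ (x i)) := by
    intro r
    have : ∀ i : Fin r, SigmaFinite (pareto1.map (hGamma γ)) := fun i =>
      inferInstanceAs (SigmaFinite (gpMeasure γ))
    rw [Measure.pi_map_pi (fun _ => (measurable_hGamma γ).aemeasurable)]
    rfl
  have hm : ∀ r, Measurable fun (x : Fin r → ℝ) i => hGamma γ (x i) := fun r =>
    measurable_pi_lambda _ fun i => (measurable_hGamma γ).comp (measurable_pi_apply i)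
  rw [hgp, hgp, lintegral_map _ (hm _), lintegral_map _ (hm _)]
  · obtain ⟨M, hM⟩ := total_aux γ hq hn
    have h1 := hM (fun _ => 1) measurable_const (fun _ _ _ _ => rfl)
    simp at h1
    have h2 := hM F hF hinv
    rw [← h1, one_mul] at h2
    exact h2
  · exact hF.comp measurable_refVec
  · exact hF.comp (measurable_pi_lambda _ fun j => measurable_descStat _ j)

def topSet {ι : Type*} [Fintype ι] (q : ℕ) (i : ι) : Set (ι → ℝ) := {x | cgt x (x i) < q}

lemma measurableSet_topSet {ι : Type*} [Fintype ι] (q : ℕ) (i : ι) :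
    MeasurableSet (topSet q i) := by
  have : Measurable fun x : ι → ℝ => cgt x (x i) := by
    unfold cgt
    refine Finset.measurable_sum _ fun k _ => ?_
    exact Measurable.ite (measurableSet_lt (measurable_pi_apply i) (measurable_pi_apply k))
      measurable_const measurable_const
  exact measurableSet_lt this measurable_const

lemma card_topSet_le {ι : Type*} [Fintype ι] (q : ℕ) {x : ι → ℝ} (hx : Function.Injective x) :
    (Finset.univ.filter fun i => x ∈ topSet q i).card ≤ q := by
  have hmono : ∀ i k, x i < x k → cgt x (x k) < cgt x (x i) := by
    intro i k h
    refine lt_of_lt_of_le ?_ (cge_le_cgt x h)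
    unfold cgt cge
    refine Finset.sum_lt_sum (fun l _ => ?_) ⟨k, Finset.mem_univ _, by simp⟩
    split_ifs with h1 h2 <;> first | omega | (exfalso; linarith)
  have hinj : Function.Injective fun i => cgt x (x i) := by
    intro i k hik
    by_contra hne
    rcases lt_or_gt_of_ne (hx.ne hne) with h | h
    · exact absurd hik (hmono _ _ h).ne'
    · exact absurd hik (hmono _ _ h).ne
  calc _ ≤ (Finset.range q).card := Finset.card_le_card_of_injOn (fun i => cgt x (x i))
          (by intro i hi; exact Finset.mem_coe.2 (Finset.mem_range.2 (Finset.mem_filter.1 (Finset.mem_coe.1 hi)).2)) hinj.injOn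
    _ = q := by simp

lemma preimage_topSet {ι : Type*} [Fintype ι] (q : ℕ) (σ : Equiv.Perm ι) (i : ι) :
    (fun (x : ι → ℝ) k => x (σ k)) ⁻¹' topSet q i = topSet q (σ i) := by
  ext x
  simp only [topSet, Set.mem_preimage, Set.mem_ofPred_eq]
  have : cgt (fun k => x (σ k)) (x (σ i)) = cgt x (x (σ i)) := by
    unfold cgt
    exact Equiv.sum_comp σ (fun k => if x (σ i) < x k then 1 else 0)
  rw [this]

lemma topSet_one {ι : Type*} [Fintype ι] (μ : Measure ℝ) [IsProbabilityMeasure μ]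
    (hμ : ∀ z, μ {z} = 0) (q : ℕ) (i : ι) :
    (Fintype.card ι : ℝ≥0∞) * (Measure.pi fun _ : ι => μ) (topSet q i) ≤ q := by
  set ν := Measure.pi fun _ : ι => μ with hν
  have hm : ∀ σ : Equiv.Perm ι, Measurable fun (x : ι → ℝ) k => x (σ k) := fun σ =>
    measurable_pi_lambda _ fun k => measurable_pi_apply _
  have h1 : ∀ k, ν (topSet q k) = ν (topSet q i) := by
    intro k
    rw [hν, ← pi_perm μ (Equiv.swap i k), Measure.map_apply (hm _) (measurableSet_topSet q i),
      preimage_topSet, pi_perm, Equiv.swap_apply_left]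
  calc (Fintype.card ι : ℝ≥0∞) * ν (topSet q i) = ∑ k, ν (topSet q k) := by
        simp [h1]
    _ = ∫⁻ x, ∑ k, (topSet q k).indicator 1 x ∂ν := by
        rw [lintegral_finsetSum]
        · simp [lintegral_indicator_one, measurableSet_topSet]
        · exact fun k _ => measurable_one.indicator (measurableSet_topSet q k)
    _ ≤ ∫⁻ x, (q : ℝ≥0∞) ∂ν := by
        refine lintegral_mono_ae ?_
        filter_upwards [pi_ae_inj (ι := ι) μ hμ] with x hx
        have := card_topSet_le q hx
        calc ∑ k, (topSet q k).indicator (1 : (ι → ℝ) → ℝ≥0∞) x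
            = ((Finset.univ.filter fun i => x ∈ topSet q i).card : ℝ≥0∞) := by
              simp [Set.indicator_apply]
          _ ≤ q := by exact_mod_cast this
    _ = q := by simp

lemma topSet_two {ι : Type*} [Fintype ι] (μ : Measure ℝ) [IsProbabilityMeasure μ]
    (hμ : ∀ z, μ {z} = 0) (q : ℕ) (i j : ι) (hij : i ≠ j) :
    ((Fintype.card ι * Fintype.card ι - Fintype.card ι : ℕ) : ℝ≥0∞) *
      (Measure.pi fun _ : ι => μ) (topSet q i ∩ topSet q j) ≤ ((q * q - q : ℕ) : ℝ≥0∞) := by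
  set ν := Measure.pi fun _ : ι => μ with hν
  have hm : ∀ σ : Equiv.Perm ι, Measurable fun (x : ι → ℝ) k => x (σ k) := fun σ =>
    measurable_pi_lambda _ fun k => measurable_pi_apply _
  have hms : ∀ a b : ι, MeasurableSet (topSet q a ∩ topSet q b) := fun a b =>
    (measurableSet_topSet q a).inter (measurableSet_topSet q b)
  have h1 : ∀ k l, k ≠ l → ν (topSet q k ∩ topSet q l) = ν (topSet q i ∩ topSet q j) := by
    intro k l hkl
    let σ : Equiv.Perm ι := Equiv.swap (Equiv.swap i k j) l * Equiv.swap i k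
    have hi : σ i = k := by
      simp only [σ, Equiv.Perm.mul_apply, Equiv.swap_apply_left]
      refine Equiv.swap_apply_of_ne_of_ne ?_ hkl
      intro h
      apply hij
      apply (Equiv.swap i k).injective
      rw [← h, Equiv.swap_apply_left]
    have hj : σ j = l := by
      simp only [σ, Equiv.Perm.mul_apply, Equiv.swap_apply_left]
    rw [hν, ← pi_perm μ σ, Measure.map_apply (hm _) (hms i j), Set.preimage_inter,
      preimage_topSet, preimage_topSet, pi_perm, hi, hj]
  calc ((Fintype.card ι * Fintype.card ι - Fintype.card ι : ℕ) : ℝ≥0∞) *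
        ν (topSet q i ∩ topSet q j)
      = ∑ a ∈ (Finset.univ : Finset ι).offDiag, ν (topSet q a.1 ∩ topSet q a.2) := by
        rw [Finset.sum_congr rfl (fun a ha => h1 a.1 a.2 (Finset.mem_offDiag.1 ha).2.2),
          Finset.sum_const, Finset.offDiag_card, nsmul_eq_mul, Finset.card_univ]
    _ = ∫⁻ x, ∑ a ∈ (Finset.univ : Finset ι).offDiag,
          (topSet q a.1 ∩ topSet q a.2).indicator 1 x ∂ν := by
        rw [lintegral_finsetSum]
        · simp [lintegral_indicator_one, hms]
        · exact fun k _ => measurable_one.indicator (hms _ _)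
    _ ≤ ∫⁻ x, ((q * q - q : ℕ) : ℝ≥0∞) ∂ν := by
        refine lintegral_mono_ae ?_
        filter_upwards [pi_ae_inj (ι := ι) μ hμ] with x hx
        have := card_topSet_le q hx
        calc ∑ a ∈ (Finset.univ : Finset ι).offDiag,
              (topSet q a.1 ∩ topSet q a.2).indicator (1 : (ι → ℝ) → ℝ≥0∞) x
            = (((Finset.univ.filter fun i => x ∈ topSet q i).offDiag).card : ℝ≥0∞) := by
              simp only [Set.indicator_apply, Pi.one_apply]
              rw [Finset.sum_boole]
              congr 2
              ext a
              simp [Finset.mem_offDiag]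
              tauto
          _ ≤ ((q * q - q : ℕ) : ℝ≥0∞) := by
              rw [Finset.offDiag_card]
              norm_cast
              rw [← Nat.mul_sub_one, ← Nat.mul_sub_one]
              exact Nat.mul_le_mul this (by omega)
    _ = ((q * q - q : ℕ) : ℝ≥0∞) := by simp

section prob
variable {Ω : Type*} [MeasurableSpace Ω] {P : Measure Ω} [IsProbabilityMeasure P]
  {μ : Measure ℝ} [IsProbabilityMeasure μ] {Z : ℕ → Ω → ℝ}

lemma law_pi (hZ : ∀ i, Measurable (Z i)) (hI : iIndepFun Z P) (hD : ∀ i, P.map (Z i) = μ)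
    {ι : Type*} [Fintype ι] (g : ι → ℕ) (hg : Function.Injective g) :
    P.map (fun ω i => Z (g i) ω) = Measure.pi fun _ : ι => μ := by
  have h := hI.precomp hg
  rw [iIndepFun_iff_map_fun_eq_pi_map (fun i => (hZ _).aemeasurable)] at h
  simpa [hD] using h

lemma inTopQ_iff (q : ℕ) (S : Finset ℕ) (i : S) (ω : Ω) :
    inTopQ q Z S i ω ↔ (fun s : S => Z s ω) ∈ topSet q i := by
  unfold inTopQ topSet cgt
  simp only [Set.mem_ofPred_eq]
  rw [Finset.card_filter, ← Finset.sum_coe_sort]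

lemma prob_one (hZ : ∀ i, Measurable (Z i)) (hI : iIndepFun Z P) (hD : ∀ i, P.map (Z i) = μ)
    (hμ : ∀ z, μ {z} = 0) (q : ℕ) (S : Finset ℕ) (i : ℕ) (hi : i ∈ S) :
    P.real {ω | inTopQ q Z S i ω} ≤ q / S.card := by
  have h := topSet_one μ hμ q (⟨i, hi⟩ : S)
  rw [← law_pi hZ hI hD (fun s : S => (s : ℕ)) Subtype.val_injective,
    Measure.map_apply (measurable_pi_lambda _ fun s => hZ _) (measurableSet_topSet _ _)] at h
  have he : {ω | inTopQ q Z S i ω} = (fun ω (s : S) => Z s ω) ⁻¹' topSet q (⟨i, hi⟩ : S) := by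
    ext ω; exact inTopQ_iff q S ⟨i, hi⟩ ω
  rw [← he] at h
  have hc : 0 < S.card := Finset.card_pos.2 ⟨i, hi⟩
  have h' := ENNReal.toReal_mono (by simp) h
  rw [ENNReal.toReal_mul] at h'
  simp at h'
  rw [le_div_iff₀ (by exact_mod_cast hc), mul_comm]
  exact h'

lemma prob_two (hZ : ∀ i, Measurable (Z i)) (hI : iIndepFun Z P) (hD : ∀ i, P.map (Z i) = μ)
    (hμ : ∀ z, μ {z} = 0) (q : ℕ) (hq : 1 ≤ q) (S : Finset ℕ) (i j : ℕ) (hi : i ∈ S) (hj : j ∈ S)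
    (hij : i ≠ j) :
    P.real ({ω | inTopQ q Z S i ω} ∩ {ω | inTopQ q Z S j ω})
      ≤ q * (q - 1) / (S.card * (S.card - 1)) := by
  have h := topSet_two μ hμ q (⟨i, hi⟩ : S) ⟨j, hj⟩ (by simpa using hij)
  rw [← law_pi hZ hI hD (fun s : S => (s : ℕ)) Subtype.val_injective,
    Measure.map_apply (measurable_pi_lambda _ fun s => hZ _)
      ((measurableSet_topSet _ _).inter (measurableSet_topSet _ _))] at h
  have he : {ω | inTopQ q Z S i ω} ∩ {ω | inTopQ q Z S j ω}
      = (fun ω (s : S) => Z s ω) ⁻¹' (topSet q (⟨i, hi⟩ : S) ∩ topSet q (⟨j, hj⟩ : S)) := by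
    ext ω
    exact and_congr (inTopQ_iff q S ⟨i, hi⟩ ω) (inTopQ_iff q S ⟨j, hj⟩ ω)
  rw [← he] at h
  have hc : 1 < S.card := Finset.one_lt_card.2 ⟨i, hi, j, hj, hij⟩
  have hc' : (1 : ℝ) < S.card := by exact_mod_cast hc
  have h' := ENNReal.toReal_mono (ENNReal.natCast_ne_top _) h
  rw [ENNReal.toReal_mul, ENNReal.toReal_natCast, ENNReal.toReal_natCast, Fintype.card_coe,
    ← Nat.mul_sub_one, ← Nat.mul_sub_one, Nat.cast_mul, Nat.cast_mul, Nat.cast_sub hc.le,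
    Nat.cast_sub hq, Nat.cast_one] at h'
  rw [le_div_iff₀ (mul_pos (by linarith) (by linarith)), mul_comm]
  exact h'

lemma inTopQ_mono (q : ℕ) {S T : Finset ℕ} (h : S ⊆ T) (i : ℕ) (ω : Ω)
    (hT : inTopQ q Z T i ω) : inTopQ q Z S i ω :=
  lt_of_le_of_lt (Finset.card_le_card (Finset.filter_subset_filter _ h)) hT

lemma prob_cross (hZ : ∀ i, Measurable (Z i)) (hI : iIndepFun Z P) (hD : ∀ i, P.map (Z i) = μ)
    (hμ : ∀ z, μ {z} = 0) (q : ℕ) (S T S' T' : Finset ℕ) (i j : ℕ) (hi : i ∈ S) (hj : j ∈ T)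
    (hST : Disjoint S T) (hS : S ⊆ S') (hT : T ⊆ T') :
    P.real ({ω | inTopQ q Z S' i ω} ∩ {ω | inTopQ q Z T' j ω})
      ≤ (q / S.card) * (q / T.card) := by
  have h1 : {ω | inTopQ q Z S' i ω} ∩ {ω | inTopQ q Z T' j ω}
      ⊆ {ω | inTopQ q Z S i ω} ∩ {ω | inTopQ q Z T j ω} :=
    Set.inter_subset_inter (fun ω h => inTopQ_mono q hS i ω h) (fun ω h => inTopQ_mono q hT j ω h)
  have he : ∀ (S : Finset ℕ) (i : ℕ) (hi : i ∈ S), {ω | inTopQ q Z S i ω}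
      = (fun ω (s : S) => Z s ω) ⁻¹' topSet q (⟨i, hi⟩ : S) := by
    intro S i hi
    ext ω; exact inTopQ_iff q S ⟨i, hi⟩ ω
  have h2 : P ({ω | inTopQ q Z S i ω} ∩ {ω | inTopQ q Z T j ω})
      = P {ω | inTopQ q Z S i ω} * P {ω | inTopQ q Z T j ω} := by
    rw [he S i hi, he T j hj]
    exact (hI.indepFun_finset S T hST hZ).measure_inter_preimage_eq_mul _ _
      (measurableSet_topSet _ _) (measurableSet_topSet _ _)
  calc _ ≤ P.real ({ω | inTopQ q Z S i ω} ∩ {ω | inTopQ q Z T j ω}) := measureReal_mono h1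
    _ = P.real {ω | inTopQ q Z S i ω} * P.real {ω | inTopQ q Z T j ω} := by
        simp only [measureReal_def]; rw [h2, ENNReal.toReal_mul]
    _ ≤ _ := mul_le_mul (prob_one hZ hI hD hμ q S i hi) (prob_one hZ hI hD hμ q T j hj)
        measureReal_nonneg (by positivity)

end prob


section fin
variable {Ω : Type*} [MeasurableSpace Ω] {P : Measure Ω} [IsProbabilityMeasure P]
  {μ : Measure ℝ} [IsProbabilityMeasure μ] {Z : ℕ → Ω → ℝ}

lemma prob_cross' (hZ : ∀ i, Measurable (Z i)) (hI : iIndepFun Z P) (hD : ∀ i, P.map (Z i) = μ)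
    (hμ : ∀ z, μ {z} = 0) {q ℓ m : ℕ} (hℓ : 2 ≤ ℓ) (hm : ℓ + q ≤ m)
    (i j : ℕ) (hi : i ∈ Finset.Icc (m - ℓ + 1) m) (hj : j ∈ Finset.Icc (m - ℓ + 1) m)
    (hij : i ≠ j) :
    P.real ({ω | inTopQ q Z (Finset.Icc 1 m) i ω} ∩
        {ω | inTopQ q Z (Finset.Icc (m - ℓ + 1) (2 * m - ℓ)) j ω})
      ≤ (q : ℝ) ^ 2 / (((m : ℝ) - 1) * ((m : ℝ) - ℓ + 1)) := by
  rw [Finset.mem_Icc] at hi hj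
  have h := prob_cross hZ hI hD hμ q ((Finset.Icc 1 m).erase j)
    (insert j (Finset.Icc (m + 1) (2 * m - ℓ))) (Finset.Icc 1 m)
    (Finset.Icc (m - ℓ + 1) (2 * m - ℓ)) i j
    (by simp only [Finset.mem_erase, Finset.mem_Icc]; omega) (by simp)
    (by
      rw [Finset.disjoint_left]
      intro x hx hx'
      simp only [Finset.mem_erase, Finset.mem_insert, Finset.mem_Icc] at hx hx'
      omega)
    (Finset.erase_subset _ _)
    (by
      intro x hx
      simp only [Finset.mem_insert, Finset.mem_Icc] at hx ⊢
      omega)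
  have c1 : ((Finset.Icc 1 m).erase j).card = m - 1 := by
    rw [Finset.card_erase_of_mem (by simp only [Finset.mem_Icc]; omega)]; simp
  have c2 : (insert j (Finset.Icc (m + 1) (2 * m - ℓ))).card = m - ℓ + 1 := by
    rw [Finset.card_insert_of_notMem (by simp only [Finset.mem_Icc]; omega), Nat.card_Icc]
    omega
  rw [c1, c2] at h
  refine h.trans (le_of_eq ?_)
  rw [Nat.cast_add, Nat.cast_sub (by omega : 1 ≤ m), Nat.cast_sub (by omega : ℓ ≤ m), Nat.cast_one,
    div_mul_div_comm, sq]

lemma prob_pair (hZ : ∀ i, Measurable (Z i)) (hI : iIndepFun Z P) (hD : ∀ i, P.map (Z i) = μ)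
    (hμ : ∀ z, μ {z} = 0) {q ℓ m : ℕ} (hq : 1 ≤ q) (hℓ : 2 ≤ ℓ) (hm : ℓ + q ≤ m)
    (i j : ℕ) (hi : i ∈ Finset.Icc (m - ℓ + 1) m) (hj : j ∈ Finset.Icc (m - ℓ + 1) m)
    (hij : i ≠ j) :
    P.real {ω | (inTopQ q Z (Finset.Icc 1 m) i ω ∨
          inTopQ q Z (Finset.Icc (m - ℓ + 1) (2 * m - ℓ)) i ω) ∧
        (inTopQ q Z (Finset.Icc 1 m) j ω ∨
          inTopQ q Z (Finset.Icc (m - ℓ + 1) (2 * m - ℓ)) j ω)}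
      ≤ 2 * (2 * (q : ℝ) ^ 2 - q) / (((m : ℝ) - 1) * ((m : ℝ) - ℓ + 1)) := by
  have c1 := prob_cross' hZ hI hD hμ hℓ hm i j hi hj hij
  have c2 := prob_cross' hZ hI hD hμ hℓ hm j i hj hi hij.symm
  rw [Finset.mem_Icc] at hi hj
  have d1 := prob_two hZ hI hD hμ q hq (Finset.Icc 1 m) i j
    (by rw [Finset.mem_Icc]; omega) (by rw [Finset.mem_Icc]; omega) hij
  have d2 := prob_two hZ hI hD hμ q hq (Finset.Icc (m - ℓ + 1) (2 * m - ℓ)) i j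
    (by rw [Finset.mem_Icc]; omega) (by rw [Finset.mem_Icc]; omega) hij
  have e1 : (Finset.Icc 1 m).card = m := by simp
  have e2 : (Finset.Icc (m - ℓ + 1) (2 * m - ℓ)).card = m := by simp; omega
  rw [e1] at d1
  rw [e2] at d2
  have hl : (2:ℝ) ≤ ℓ := by exact_mod_cast hℓ
  have hq' : (1:ℝ) ≤ q := by exact_mod_cast hq
  have hm' : (ℓ:ℝ) + q ≤ m := by exact_mod_cast hm
  have key : (q:ℝ) * (q - 1) / (m * (m - 1)) ≤
      (q:ℝ) * (q - 1) / (((m : ℝ) - 1) * ((m : ℝ) - ℓ + 1)) := by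
    apply div_le_div_of_nonneg_left
    · exact mul_nonneg (by linarith) (by linarith)
    · exact mul_pos (by linarith) (by linarith)
    · rw [mul_comm]; exact mul_le_mul_of_nonneg_right (by linarith) (by linarith)
  set A := fun i => {ω | inTopQ q Z (Finset.Icc 1 m) i ω}
  set B := fun i => {ω | inTopQ q Z (Finset.Icc (m - ℓ + 1) (2 * m - ℓ)) i ω}
  have hsub : {ω | (inTopQ q Z (Finset.Icc 1 m) i ω ∨
          inTopQ q Z (Finset.Icc (m - ℓ + 1) (2 * m - ℓ)) i ω) ∧
        (inTopQ q Z (Finset.Icc 1 m) j ω ∨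
          inTopQ q Z (Finset.Icc (m - ℓ + 1) (2 * m - ℓ)) j ω)}
      ⊆ ((A i ∩ A j) ∪ (B i ∩ B j)) ∪ ((A i ∩ B j) ∪ (A j ∩ B i)) := by
    rintro ω ⟨h1 | h1, h2 | h2⟩
    · exact Or.inl (Or.inl ⟨h1, h2⟩)
    · exact Or.inr (Or.inl ⟨h1, h2⟩)
    · exact Or.inr (Or.inr ⟨h2, h1⟩)
    · exact Or.inl (Or.inr ⟨h1, h2⟩)
  calc _ ≤ P.real (((A i ∩ A j) ∪ (B i ∩ B j)) ∪ ((A i ∩ B j) ∪ (A j ∩ B i))) :=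
        measureReal_mono hsub
    _ ≤ (P.real (A i ∩ A j) + P.real (B i ∩ B j)) + (P.real (A i ∩ B j) + P.real (A j ∩ B i)) :=
        (measureReal_union_le _ _).trans
          (add_le_add (measureReal_union_le _ _) (measureReal_union_le _ _))
    _ ≤ (q * (q - 1) / (((m : ℝ) - 1) * ((m : ℝ) - ℓ + 1)) +
          q * (q - 1) / (((m : ℝ) - 1) * ((m : ℝ) - ℓ + 1))) +
        ((q : ℝ) ^ 2 / (((m : ℝ) - 1) * ((m : ℝ) - ℓ + 1)) +
          (q : ℝ) ^ 2 / (((m : ℝ) - 1) * ((m : ℝ) - ℓ + 1))) :=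
        add_le_add (add_le_add (d1.trans key) (d2.trans key)) (add_le_add c1 c2)
    _ = _ := by ring

lemma prob_N (hZ : ∀ i, Measurable (Z i)) (hI : iIndepFun Z P) (hD : ∀ i, P.map (Z i) = μ)
    (hμ : ∀ z, μ {z} = 0) {q ℓ m : ℕ} (hq : 1 ≤ q) (hℓ : 2 ≤ ℓ) (hm : ℓ + q ≤ m) :
    P.real {ω | 2 ≤ Ncount q Z ℓ m ω} ≤ ((ℓ : ℝ) * ((ℓ : ℝ) - 1) / 2) *
      (2 * (2 * (q : ℝ) ^ 2 - q) / (((m : ℝ) - 1) * ((m : ℝ) - ℓ + 1))) := by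
  set O := Finset.Icc (m - ℓ + 1) m with hO
  set M : ℕ → Ω → Prop := fun i ω => inTopQ q Z (Finset.Icc 1 m) i ω ∨
      inTopQ q Z (Finset.Icc (m - ℓ + 1) (2 * m - ℓ)) i ω with hM
  have hsub : {ω | 2 ≤ Ncount q Z ℓ m ω} ⊆
      ⋃ s ∈ Finset.powersetCard 2 O, {ω | ∀ i ∈ s, M i ω} := by
    intro ω hω
    obtain ⟨s, hs, hc⟩ := Finset.exists_subset_card_eq (show 2 ≤ (O.filter fun i => M i ω).card from hω)
    simp only [Set.mem_iUnion]
    refine ⟨s, Finset.mem_powersetCard.2 ⟨hs.trans (Finset.filter_subset _ _), hc⟩, ?_⟩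
    intro i hi
    exact (Finset.mem_filter.1 (hs hi)).2
  have hcard : O.card = ℓ := by simp [hO]; omega
  calc _ ≤ P.real (⋃ s ∈ Finset.powersetCard 2 O, {ω | ∀ i ∈ s, M i ω}) :=
        measureReal_mono hsub (measure_ne_top _ _)
    _ ≤ ∑ s ∈ Finset.powersetCard 2 O, P.real {ω | ∀ i ∈ s, M i ω} :=
        measureReal_biUnion_finset_le _ _
    _ ≤ ∑ s ∈ Finset.powersetCard 2 O,
        (2 * (2 * (q : ℝ) ^ 2 - q) / (((m : ℝ) - 1) * ((m : ℝ) - ℓ + 1))) := by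
        refine Finset.sum_le_sum fun s hs => ?_
        obtain ⟨hs1, hs2⟩ := Finset.mem_powersetCard.1 hs
        obtain ⟨i, j, hij, rfl⟩ := Finset.card_eq_two.1 hs2
        refine le_trans (measureReal_mono ?_)
          (prob_pair hZ hI hD hμ hq hℓ hm i j (hs1 (by simp)) (hs1 (by simp)) hij)
        intro ω h
        exact ⟨h i (by simp), h j (by simp)⟩
    _ = _ := by
        rw [Finset.sum_const, Finset.card_powersetCard, hcard, nsmul_eq_mul, Nat.cast_choose_two]

end fin

lemma measurable_KmOn {Ω : Type*} [MeasurableSpace Ω] {q : ℕ} {K : (Fin q → ℝ) → ℝ}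
    (hK : Measurable K) {Z : ℕ → Ω → ℝ} (hZ : ∀ i, Measurable (Z i)) (S : Finset ℕ) :
    Measurable (KmOn K Z S) :=
  (measurable_Km hK _).comp (measurable_pi_lambda _ fun _ => hZ _)

lemma moment_KmOn {Ω : Type*} [MeasurableSpace Ω] (P : Measure Ω) [IsProbabilityMeasure P]
    (γ : ℝ) {q : ℕ} (K : (Fin q → ℝ) → ℝ) (hK : Measurable K)
    (hLS : LocScaleInvariant K) (hMom : MomentCond γ K)
    (Z : ℕ → Ω → ℝ) (hZ : ∀ i, Measurable (Z i)) (hI : iIndepFun Z P)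
    (hD : ∀ i, Measure.map (Z i) P = gpMeasure γ) (hq : 1 ≤ q) (S : Finset ℕ) (hS : q ≤ S.card)
    (a : ℝ) (ha : 2 < a) :
    (∫⁻ ω, (‖KmOn K Z S ω‖ₑ ^ a) ∂P) ^ (1/a) = ENNReal.ofReal (normKa γ K a) := by
  have hinj : Function.Injective fun j => ((S.orderIsoOfFin rfl j).1 : ℕ) :=
    Subtype.val_injective.comp (S.orderIsoOfFin rfl).injective
  have hlaw := law_pi hZ hI hD _ hinj
  have hconv : ∀ x : ℝ, ‖x‖ₑ ^ a = ENNReal.ofReal (|x| ^ a) := by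
    intro x
    rw [← ENNReal.ofReal_rpow_of_nonneg (abs_nonneg x) (by linarith), Real.enorm_eq_ofReal_abs]
  have hF : Measurable fun x : Fin q → ℝ => ENNReal.ofReal (|K x| ^ a) := by
    have : Measurable fun x => |K x| := hK.abs
    exact (this.pow_const a).ennreal_ofReal
  have h1 : ∫⁻ ω, (‖KmOn K Z S ω‖ₑ ^ a) ∂P
      = ∫⁻ z, ENNReal.ofReal (|K (refVec z)| ^ a) ∂(gpPi γ (q-1)) := by
    rw [← total γ hq hS (fun x => ENNReal.ofReal (|K x| ^ a)) hF (by
      intro c b hc x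
      simp only [hLS c b hc x])]
    unfold gpPi
    rw [← hlaw, lintegral_map]
    · refine lintegral_congr fun ω => ?_
      rw [hconv]; rfl
    · have := (measurable_Km hK S.card).abs
      exact (this.pow_const a).ennreal_ofReal
    · exact measurable_pi_lambda _ fun _ => hZ _
  have hmeas : Measurable fun z : Fin (q-1) → ℝ => |K (refVec z)| ^ a :=
    ((hK.comp measurable_refVec).abs).pow_const a
  have hint : 0 ≤ ∫ z, |K (refVec z)| ^ a ∂(gpPi γ (q-1)) :=
    integral_nonneg fun z => by positivity
  rw [h1]
  unfold normKa
  rw [← ENNReal.ofReal_rpow_of_nonneg hint (by positivity)]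
  congr 1
  rw [ofReal_integral_eq_lintegral_ofReal]
  · refine ⟨hmeas.aestronglyMeasurable, ?_⟩
    rw [hasFiniteIntegral_iff_ofReal (ae_of_all _ fun z => by positivity)]
    exact hMom a (by linarith)
  · exact ae_of_all _ fun z => by positivity

lemma holder_three {Ω : Type*} [MeasurableSpace Ω] (ν : Measure Ω) (X Y : Ω → ℝ≥0∞)
    (hX : Measurable X) (hY : Measurable Y) (a : ℝ) (ha : 2 < a) :
    ∫⁻ ω, X ω * Y ω ∂ν ≤ (∫⁻ ω, X ω ^ a ∂ν) ^ (1/a) * (∫⁻ ω, Y ω ^ a ∂ν) ^ (1/a) *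
      ν Set.univ ^ (1 - 2/a) := by
  have ha0 : a ≠ 0 := by linarith
  have h := ENNReal.lintegral_prod_norm_pow_le (μ := ν) (Finset.univ : Finset (Fin 3))
    (f := ![fun ω => X ω ^ a, fun ω => Y ω ^ a, fun _ => 1]) (p := ![1/a, 1/a, 1 - 2/a])
    (by
      intro i _
      fin_cases i
      · exact (hX.pow_const a).aemeasurable
      · exact (hY.pow_const a).aemeasurable
      · exact aemeasurable_const)
    (by simp [Fin.sum_univ_three]; ring)
    (by
      intro i _
      have : 2 / a ≤ 1 := by rw [div_le_one (by linarith)]; linarith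
      fin_cases i
      · simp; linarith
      · simp; linarith
      · simpa using this)
  simp only [Fin.prod_univ_three, Matrix.cons_val_zero, Matrix.cons_val_one, Matrix.cons_val,
    ENNReal.one_rpow, mul_one, lintegral_one, ← ENNReal.rpow_mul, mul_one_div_cancel ha0,
    ENNReal.rpow_one] at h
  exact h

lemma holder_bound {Ω : Type*} [MeasurableSpace Ω] (P : Measure Ω) [IsProbabilityMeasure P]
    (γ : ℝ) {q : ℕ} (K : (Fin q → ℝ) → ℝ) (hK : Measurable K)
    (hLS : LocScaleInvariant K) (hMom : MomentCond γ K)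
    (Z : ℕ → Ω → ℝ) (hZ : ∀ i, Measurable (Z i)) (hI : iIndepFun Z P)
    (hD : ∀ i, Measure.map (Z i) P = gpMeasure γ) (hq : 1 ≤ q) (A : Set Ω) (S T : Finset ℕ)
    (hS : q ≤ S.card) (hT : q ≤ T.card) (a : ℝ) (ha : 2 < a) :
    |∫ ω in A, KmOn K Z S ω * KmOn K Z T ω ∂P| ≤ (normKa γ K a) ^ 2 * P.real A ^ (1 - 2/a) := by
  have he : 0 ≤ 1 - 2 / a := by
    rw [sub_nonneg, div_le_one (by linarith)]; linarith
  have hn : 0 ≤ normKa γ K a := Real.rpow_nonneg (integral_nonneg fun z => by positivity) _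
  have mS := moment_KmOn P γ K hK hLS hMom Z hZ hI hD hq S hS a ha
  have mT := moment_KmOn P γ K hK hLS hMom Z hZ hI hD hq T hT a ha
  have h : ‖∫ ω in A, KmOn K Z S ω * KmOn K Z T ω ∂P‖ₑ
      ≤ ENNReal.ofReal ((normKa γ K a) ^ 2 * P.real A ^ (1 - 2/a)) := by
    calc _ ≤ ∫⁻ ω in A, ‖KmOn K Z S ω * KmOn K Z T ω‖ₑ ∂P := enorm_integral_le_lintegral_enorm _
      _ = ∫⁻ ω in A, ‖KmOn K Z S ω‖ₑ * ‖KmOn K Z T ω‖ₑ ∂P := by simp only [enorm_mul]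
      _ ≤ _ := holder_three (P.restrict A) _ _ (measurable_KmOn hK hZ S).enorm
            (measurable_KmOn hK hZ T).enorm a ha
      _ ≤ (∫⁻ ω, ‖KmOn K Z S ω‖ₑ ^ a ∂P) ^ (1/a) * (∫⁻ ω, ‖KmOn K Z T ω‖ₑ ^ a ∂P) ^ (1/a) *
            P A ^ (1 - 2/a) := by
          rw [Measure.restrict_apply_univ]
          have : 0 ≤ 1 / a := by positivity
          gcongr <;> exact Measure.restrict_le_self
      _ = _ := by
          rw [mS, mT, ENNReal.ofReal_mul (by positivity), sq, ENNReal.ofReal_mul hn,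
            ← ENNReal.ofReal_rpow_of_nonneg measureReal_nonneg he, ofReal_measureReal]
  rw [Real.enorm_eq_ofReal_abs] at h
  exact (ENNReal.ofReal_le_ofReal_iff (by positivity)).1 h

/-- Lemma: the event `N_{ℓ,m} ≥ 2`.
For all `a > 2`,
`|E[Ξ_{ℓ,m}; N_{ℓ,m} ≥ 2]| ≤ ‖K‖_a² (ℓ(ℓ-1)/2)^{1-2/a} (2(2q²-q)/((m-1)(m-ℓ+1)))^{1-2/a}`. -/
theorem xi_on_N_ge_two
    {Ω : Type*} [MeasurableSpace Ω] (P : Measure Ω) [IsProbabilityMeasure P]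
    (γ : ℝ) (q : ℕ) (hq : 3 ≤ q)
    (K : (Fin q → ℝ) → ℝ) (hKmeas : Measurable K)
    (hLS : LocScaleInvariant K)
    (hNonconst : ∃ x y : Fin q → ℝ, K x ≠ K y)
    (hMom : MomentCond γ K)
    (ℓ m : ℕ) (hℓ : 2 ≤ ℓ) (hm : ℓ + q ≤ m)
    (Z : ℕ → Ω → ℝ) (hZmeas : ∀ i, Measurable (Z i))
    (hIndep : iIndepFun Z P)
    (hDist : ∀ i, Measure.map (Z i) P = gpMeasure γ) :
    ∀ a : ℝ, 2 < a →
      |∫ ω in {ω | 2 ≤ Ncount q Z ℓ m ω}, XiRV K Z ℓ m ω ∂P|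
        ≤ (normKa γ K a) ^ 2 * ((ℓ : ℝ) * ((ℓ : ℝ) - 1) / 2) ^ (1 - 2/a) *
            (2 * (2 * (q : ℝ) ^ 2 - (q : ℝ)) /
              (((m : ℝ) - 1) * ((m : ℝ) - (ℓ : ℝ) + 1))) ^ (1 - 2/a) := by
  intro a ha
  have hA := prob_N (q := q) hZmeas hIndep hDist (gp_noAtoms γ) (by omega) hℓ hm
  have hH := holder_bound P γ K hKmeas hLS hMom Z hZmeas hIndep hDist (by omega)
    {ω | 2 ≤ Ncount q Z ℓ m ω} (Finset.Icc 1 m) (Finset.Icc (m - ℓ + 1) (2 * m - ℓ))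
    (by simp; omega) (by simp; omega) a ha
  have hl : (2:ℝ) ≤ ℓ := by exact_mod_cast hℓ
  have hq' : (3:ℝ) ≤ q := by exact_mod_cast hq
  have hm' : (ℓ:ℝ) + q ≤ m := by exact_mod_cast hm
  have h1 : 0 ≤ (ℓ:ℝ) * (ℓ - 1) / 2 := by
    apply div_nonneg (mul_nonneg _ _) <;> linarith
  have h2 : 0 ≤ (2 * (2 * (q : ℝ) ^ 2 - (q : ℝ)) /
              (((m : ℝ) - 1) * ((m : ℝ) - (ℓ : ℝ) + 1))) := by
    apply div_nonneg
    · nlinarith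
    · apply mul_nonneg <;> linarith
  have he : 0 ≤ 1 - 2 / a := by
    rw [sub_nonneg, div_le_one (by linarith)]; linarith
  rw [mul_assoc, ← Real.mul_rpow h1 h2]
  refine hH.trans ?_
  gcongr

end
end

section
/- Let N = Σ_{i=1}^{n} 1_i be a counting variable built from indicator random variables 1_1,…,1_n on a common probability space, and suppose E[1_i 1_j] ≤ ε for all i ≠ j in {1,…,n}. Then 2 P(N ≥ 2) ≤ E(N) − P(N = 1) ≤ 2 (E(N) − P(N ≥ 1)) ≤ n(n−1) ε. -/
open MeasureTheory ProbabilityTheory Filter Real Set Topology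
open scoped ENNReal NNReal Classical

noncomputable section

/-- Lemma: counting variable inequalities.
If `N = Σ_i 1_{A_i}` and `E[1_{A_i} 1_{A_j}] ≤ ε` for `i ≠ j`, then
`2 P(N ≥ 2) ≤ E(N) - P(N = 1) ≤ 2 (E(N) - P(N ≥ 1)) ≤ n(n-1)ε`. -/
theorem counting_variable_inequalities
    {Ω : Type*} [MeasurableSpace Ω] (P : Measure Ω) [IsProbabilityMeasure P]
    (n : ℕ) (A : Fin n → Set Ω) (hA : ∀ i, MeasurableSet (A i))
    (ε : ℝ) (hε : ∀ i j : Fin n, i ≠ j → (P (A i ∩ A j)).toReal ≤ ε)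
    (N : Ω → ℕ) (hN : ∀ ω, N ω = (Finset.univ.filter fun i => ω ∈ A i).card) :
    2 * (P {ω | 2 ≤ N ω}).toReal
        ≤ (∫ ω, (N ω : ℝ) ∂P) - (P {ω | N ω = 1}).toReal
    ∧ (∫ ω, (N ω : ℝ) ∂P) - (P {ω | N ω = 1}).toReal
        ≤ 2 * ((∫ ω, (N ω : ℝ) ∂P) - (P {ω | 1 ≤ N ω}).toReal)
    ∧ 2 * ((∫ ω, (N ω : ℝ) ∂P) - (P {ω | 1 ≤ N ω}).toReal)
        ≤ (n : ℝ) * ((n : ℝ) - 1) * ε := by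
  have hNm : Measurable N := by
    have : N = fun ω => ∑ i, (A i).indicator (fun _ => (1:ℕ)) ω := by
      funext ω
      rw [hN ω, Finset.card_filter]
      refine Finset.sum_congr rfl fun i _ => ?_
      simp [Set.indicator_apply]
    rw [this]
    exact Finset.measurable_sum _ fun i _ => measurable_const.indicator (hA i)
  have hNle : ∀ ω, N ω ≤ n := fun ω => by
    rw [hN ω]
    exact (Finset.card_le_univ _).trans (by simp)
  have hNi : Integrable (fun ω => (N ω : ℝ)) P := by
    refine Integrable.of_bound (C := (n:ℝ))
      (measurable_from_top.comp hNm).aestronglyMeasurable ?_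
    refine Filter.Eventually.of_forall fun ω => ?_
    simpa using hNle ω
  have hI : ∀ s : Set Ω, MeasurableSet s →
      Integrable (s.indicator (fun _ => (1:ℝ))) P ∧
      (P s).toReal = ∫ ω, s.indicator (fun _ => (1:ℝ)) ω ∂P := fun s hs =>
    ⟨(integrable_const _).indicator hs, by
      rw [integral_indicator_const _ hs]; simp [Measure.real]⟩
  have m1 : MeasurableSet {ω | N ω = 1} := hNm (measurableSet_singleton 1)
  have m2 : MeasurableSet {ω | 2 ≤ N ω} := hNm (measurableSet_Ici (a := 2))
  have m3 : MeasurableSet {ω | 1 ≤ N ω} := hNm (measurableSet_Ici (a := 1))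
  obtain ⟨i1, e1⟩ := hI _ m1
  obtain ⟨i2, e2⟩ := hI _ m2
  obtain ⟨i3, e3⟩ := hI _ m3
  refine ⟨?_, ?_, ?_⟩
  · rw [e1, e2, ← integral_sub hNi i1, ← integral_const_mul]
    refine integral_mono (i2.const_mul 2) (hNi.sub i1) fun ω => ?_
    simp only [Set.indicator_apply, Set.mem_setOf_eq]
    rcases Nat.lt_trichotomy (N ω) 1 with h | h | h
    · have : N ω = 0 := by omega
      simp [this]
    · simp [h]
    · have h2 : 2 ≤ N ω := h
      have h3 : N ω ≠ 1 := by omega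
      simp [h2, h3]
  · rw [e1, e3, ← integral_sub hNi i1, ← integral_sub hNi i3, ← integral_const_mul]
    refine integral_mono (hNi.sub i1) ((hNi.sub i3).const_mul 2) fun ω => ?_
    simp only [Set.indicator_apply, Set.mem_setOf_eq]
    rcases Nat.lt_trichotomy (N ω) 1 with h | h | h
    · have : N ω = 0 := by omega
      simp [this]
    · simp [h]
    · have h2 : 1 ≤ N ω := by omega
      have h3 : N ω ≠ 1 := by omega
      have h4 : (2:ℝ) ≤ N ω := by exact_mod_cast h
      simp only [h2, h3, if_true, if_false]
      linarith
  · have hsum : ∑ p ∈ (Finset.univ : Finset (Fin n)).offDiag, (P (A p.1 ∩ A p.2)).toReal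
        ≤ (n : ℝ) * ((n : ℝ) - 1) * ε := by
      refine (Finset.sum_le_card_nsmul _ _ ε fun p hp => ?_).trans (le_of_eq ?_)
      · exact hε _ _ (Finset.mem_offDiag.1 hp).2.2
      · rw [Finset.offDiag_card, nsmul_eq_mul, Nat.cast_sub (Nat.le_mul_self _)]
        simp
        ring_nf
        simp
    refine le_trans ?_ hsum
    rw [Finset.sum_congr rfl fun p _ => (hI _ ((hA p.1).inter (hA p.2))).2,
      ← integral_finsetSum _ fun p _ => (hI _ ((hA p.1).inter (hA p.2))).1,
      e3, ← integral_sub hNi i3, ← integral_const_mul]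
    refine integral_mono ((hNi.sub i3).const_mul 2)
      (integrable_finsetSum _ fun p _ => (hI _ ((hA p.1).inter (hA p.2))).1) fun ω => ?_
    have hp : ∑ p ∈ (Finset.univ : Finset (Fin n)).offDiag,
        (A p.1 ∩ A p.2).indicator (fun _ => (1:ℝ)) ω = (N ω : ℝ) * N ω - N ω := by
      have h1 : ((Finset.univ : Finset (Fin n)).offDiag.filter
          fun p => ω ∈ A p.1 ∩ A p.2) = (Finset.univ.filter fun i => ω ∈ A i).offDiag := by
        ext p
        simp only [Finset.mem_filter, Finset.mem_offDiag, Finset.mem_univ, true_and,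
          Set.mem_inter_iff]
        tauto
      simp only [Set.indicator_apply]
      rw [Finset.sum_boole, h1, Finset.offDiag_card, ← hN ω,
        Nat.cast_sub (Nat.le_mul_self _), Nat.cast_mul]
    simp only
    rw [hp]
    simp only [Set.indicator_apply, Set.mem_setOf_eq]
    rcases Nat.lt_trichotomy (N ω) 1 with h | h | h
    · have : N ω = 0 := by omega
      simp [this]
    · simp [h]
    · have h2 : 1 ≤ N ω := by omega
      have h4 : (2:ℝ) ≤ N ω := by exact_mod_cast h
      simp only [h2, if_true]
      nlinarith

end
end

section
/- Let γ ∈ ℝ, let q ≥ 1 and let ℓ, m be integers with ℓ ≥ 2 and m ≥ ℓ + q. Let Z_1,…,Z_{2m−1} be iid standard GP(γ) (or more generally iid with a continuous distribution). For a parameter r ∈ {1, ℓ}, let 1_{m,r,m} be the indicator of the event that Z_m is in the top-q of Z_{[1:m]} or in the top-q of Z_{[(m−r+1):(2m−r)]}. Then E[|1_{m,ℓ,m} − 1_{m,1,m}|] ≤ (q+1)q(ℓ−1)/((m+1)m). -/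
open MeasureTheory ProbabilityTheory Filter Real Set Topology
open scoped ENNReal NNReal Classical

noncomputable section

lemma aux_noties {Ω : Type*} [MeasurableSpace Ω] (P : Measure Ω) [IsProbabilityMeasure P]
    (μ : Measure ℝ) (hCont : ∀ x : ℝ, μ {x} = 0) (X Y : Ω → ℝ) (hX : Measurable X)
    (hY : Measurable Y) (hXY : IndepFun X Y P) (h2 : P.map Y = μ) :
    ∀ᵐ ω ∂P, X ω ≠ Y ω := by
  have hm : MeasurableSet {p : ℝ × ℝ | p.1 = p.2} := measurableSet_eq_fun measurable_fst measurable_snd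
  have h := (indepFun_iff_map_prod_eq_prod_map_map hX.aemeasurable hY.aemeasurable).1 hXY
  have : IsProbabilityMeasure (P.map Y) := Measure.isProbabilityMeasure_map hY.aemeasurable
  have h3 : (P.map fun ω => (X ω, Y ω)) {p : ℝ × ℝ | p.1 = p.2} = 0 := by
    rw [h, Measure.measure_prod_null hm]
    refine Filter.Eventually.of_forall fun x => ?_
    have : Prod.mk x ⁻¹' {p : ℝ × ℝ | p.1 = p.2} = {x} := by ext y; simp [eq_comm]
    show (P.map Y) (Prod.mk x ⁻¹' {p : ℝ × ℝ | p.1 = p.2}) = 0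
    rw [this, h2]; exact hCont x
  rw [Measure.map_apply (hX.prodMk hY) hm] at h3
  rw [ae_iff]; simpa using h3

/-- event: exactly `q` coordinates exceed `x i`, and `x a` is one of them -/
def auxE {ι : Type*} [Fintype ι] (q : ℕ) (i a : ι) : Set (ι → ℝ) :=
  {x | (Finset.univ.filter fun c => x i < x c).card = q ∧ x i < x a}

lemma auxE_meas {ι : Type*} [Fintype ι] (q : ℕ) (i a : ι) : MeasurableSet (auxE q i a) := by
  have hlt : ∀ c : ι, MeasurableSet {x : ι → ℝ | x i < x c} := fun c =>
    measurableSet_lt (measurable_pi_apply i) (measurable_pi_apply c)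
  have h1 : Measurable fun x : ι → ℝ => (Finset.univ.filter fun c => x i < x c).card := by
    simp only [Finset.card_filter]
    exact Finset.measurable_sum _ fun c _ => Measurable.ite (hlt c) measurable_const measurable_const
  exact (h1 (measurableSet_singleton q)).inter (hlt a)

lemma auxE_sum {ι : Type*} [Fintype ι] (q : ℕ) (x : ι → ℝ)
    (hx : ∀ i j, i ≠ j → x i ≠ x j) :
    ∑ p ∈ (Finset.univ : Finset ι).offDiag, (auxE q p.1 p.2).indicator (1 : (ι → ℝ) → ℝ≥0∞) x ≤ q := by
  have h0 : ∑ p ∈ (Finset.univ : Finset ι).offDiag,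
      (auxE q p.1 p.2).indicator (1 : (ι → ℝ) → ℝ≥0∞) x
      = (((Finset.univ : Finset ι).offDiag.filter fun p => x ∈ auxE q p.1 p.2).card : ℝ≥0∞) := by
    rw [Finset.card_filter]; push_cast
    exact Finset.sum_congr rfl fun p _ => by simp [Set.indicator_apply]
  rw [h0]
  norm_cast
  by_cases hne : ∃ i, (Finset.univ.filter fun c => x i < x c).card = q
  · obtain ⟨i, hi⟩ := hne
    refine le_of_le_of_eq (Finset.card_le_card_of_injOn Prod.snd ?_ ?_) hi
    all_goals
      have key : ∀ j, (Finset.univ.filter fun c => x j < x c).card = q → j = i := by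
        intro j hj
        by_contra hji
        have hlt : ∀ u v : ι, x u < x v → (Finset.univ.filter fun c => x v < x c).card <
            (Finset.univ.filter fun c => x u < x c).card := by
          intro u v huv
          refine Finset.card_lt_card (Finset.ssubset_iff_of_subset ?_ |>.2 ⟨v, ?_, ?_⟩)
          · intro c; simp; exact huv.trans
          · simpa using huv
          · simp
        rcases lt_or_gt_of_ne (hx j i hji) with h | h
        · have := hlt _ _ h; omega
        · have := hlt _ _ h; omega
    · intro p hp
      have hp2 : x ∈ auxE q p.1 p.2 := (Finset.mem_filter.1 (Finset.mem_coe.1 hp)).2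
      have := key _ hp2.1
      refine Finset.mem_coe.2 (Finset.mem_filter.2 ⟨Finset.mem_univ _, ?_⟩)
      rw [← this]; exact hp2.2
    · intro p hp p' hp' h
      have hp2 : x ∈ auxE q p.1 p.2 := (Finset.mem_filter.1 (Finset.mem_coe.1 hp)).2
      have hp3 : x ∈ auxE q p'.1 p'.2 := (Finset.mem_filter.1 (Finset.mem_coe.1 hp')).2
      exact Prod.ext ((key _ hp2.1).trans (key _ hp3.1).symm) h
  · push Not at hne
    rw [Finset.filter_false_of_mem]
    · simp
    · intro p _ h; exact hne _ h.1

lemma aux_iid {Ω : Type*} [MeasurableSpace Ω] (P : Measure Ω) [IsProbabilityMeasure P]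
    (μ : Measure ℝ) (hCont : ∀ x : ℝ, μ {x} = 0) {ι : Type*} [Fintype ι] (X : ι → Ω → ℝ)
    (hX : ∀ i, Measurable (X i)) (hI : iIndepFun X P) (hD : ∀ i, P.map (X i) = μ)
    (q : ℕ) (i a : ι) (hia : i ≠ a) :
    P.real {ω | (fun c => X c ω) ∈ auxE q i a} ≤
      (q : ℝ) / ((Fintype.card ι : ℝ) * ((Fintype.card ι : ℝ) - 1)) := by
  have hXm : Measurable fun ω c => X c ω := measurable_pi_lambda _ hX
  have hlaw : ∀ σ : Equiv.Perm ι, P.map (fun ω c => X (σ c) ω) = Measure.pi fun _ => μ := by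
    intro σ
    have h1 : iIndepFun (fun c => X (σ c)) P := hI.precomp σ.injective
    have := (iIndepFun_iff_map_fun_eq_pi_map (fun c => (hX (σ c)).aemeasurable)).1 h1
    rw [this]; simp [hD]
  have hsym : ∀ p ∈ (Finset.univ : Finset ι).offDiag,
      P {ω | (fun c => X c ω) ∈ auxE q p.1 p.2} = P {ω | (fun c => X c ω) ∈ auxE q i a} := by
    rintro ⟨j, b⟩ hp
    have hjb : j ≠ b := by simpa using hp
    obtain ⟨σ, hσi, hσa⟩ : ∃ σ : Equiv.Perm ι, σ i = j ∧ σ a = b := by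
      let τ := Equiv.swap i j
      have h2 : τ a ≠ j := by
        intro h
        have : τ i = j := Equiv.swap_apply_left _ _
        exact hia (τ.injective (this.trans h.symm))
      refine ⟨τ.trans (Equiv.swap (τ a) b), ?_, ?_⟩
      · simp only [Equiv.trans_apply]
        rw [show τ i = j from Equiv.swap_apply_left _ _]
        exact Equiv.swap_apply_of_ne_of_ne h2.symm hjb
      · simp
    have e1 : {ω | (fun c => X c ω) ∈ auxE q j b} =
        (fun ω c => X (σ c) ω) ⁻¹' auxE q i a := by
      ext ω
      simp only [auxE, Set.mem_ofPred_eq, Set.mem_preimage, hσi, hσa]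
      have : (Finset.univ.filter fun c => X j ω < X c ω).card =
          (Finset.univ.filter fun c => X j ω < X (σ c) ω).card := by
        symm
        refine Finset.card_bij (fun c _ => σ c) ?_ ?_ ?_
        · intro c; simp
        · intro c _ d _ h; exact σ.injective h
        · intro c hc; exact ⟨σ.symm c, by simpa using hc, by simp⟩
      rw [this]
    have e2 : {ω | (fun c => X c ω) ∈ auxE q i a} =
        (fun ω c => X ((1 : Equiv.Perm ι) c) ω) ⁻¹' auxE q i a := rfl
    show P {ω | (fun c => X c ω) ∈ auxE q j b} = _
    rw [e1, e2, ← Measure.map_apply (measurable_pi_lambda _ fun c => hX _) (auxE_meas _ _ _),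
      ← Measure.map_apply (measurable_pi_lambda _ fun c => hX _) (auxE_meas _ _ _), hlaw, hlaw]
  have hnt : ∀ᵐ ω ∂P, ∀ i j, i ≠ j → X i ω ≠ X j ω := by
    rw [ae_all_iff]; intro i; rw [ae_all_iff]; intro j
    by_cases hij : i = j
    · simp [hij]
    · filter_upwards [aux_noties P μ hCont _ _ (hX i) (hX j) (hI.indepFun hij) (hD j)] with ω h _
      exact h
  have hmain : ∑ p ∈ (Finset.univ : Finset ι).offDiag,
      P {ω | (fun c => X c ω) ∈ auxE q p.1 p.2} ≤ q := by
    calc _ = ∑ p ∈ (Finset.univ : Finset ι).offDiag, ∫⁻ ω,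
            (auxE q p.1 p.2).indicator (1 : (ι → ℝ) → ℝ≥0∞) (fun c => X c ω) ∂P := by
          refine Finset.sum_congr rfl fun p _ => ?_
          exact (lintegral_indicator_one (hXm (auxE_meas q p.1 p.2))).symm
      _ = ∫⁻ ω, ∑ p ∈ (Finset.univ : Finset ι).offDiag,
            (auxE q p.1 p.2).indicator (1 : (ι → ℝ) → ℝ≥0∞) (fun c => X c ω) ∂P := by
          rw [lintegral_finsetSum]
          intro p _
          exact (measurable_one.indicator (auxE_meas q p.1 p.2)).comp hXm
      _ ≤ ∫⁻ ω, (q : ℝ≥0∞) ∂P := by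
          refine lintegral_mono_ae ?_
          filter_upwards [hnt] with ω h
          exact auxE_sum q _ h
      _ = q := by simp
  rw [Finset.sum_congr rfl hsym, Finset.sum_const, Finset.offDiag_card, nsmul_eq_mul,
    Finset.card_univ] at hmain
  have hc : 1 < Fintype.card ι := Fintype.one_lt_card_iff.2 ⟨i, a, hia⟩
  have hr := ENNReal.toReal_mono (by simp) hmain
  rw [ENNReal.toReal_mul, ENNReal.toReal_natCast, ENNReal.toReal_natCast,
    Nat.cast_sub (Nat.le_mul_self _)] at hr
  push_cast at hr
  have hc' : (1 : ℝ) < Fintype.card ι := by exact_mod_cast hc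
  rw [le_div_iff₀ (by nlinarith)]
  simp only [Measure.real]
  linarith

lemma aux_step {Ω : Type*} [MeasurableSpace Ω] (P : Measure Ω) [IsProbabilityMeasure P]
    (q m r : ℕ) (hr : 1 ≤ r) (hrm : r < m)
    (Z : ℕ → Ω → ℝ) (hZmeas : ∀ i, Measurable (Z i))
    (hIndep : iIndepFun Z P)
    (μ : Measure ℝ) (hDist : ∀ i, Measure.map (Z i) P = μ)
    (hCont : ∀ x : ℝ, μ {x} = 0) (T : Ω → Prop) :
    P.real (symmDiff
        {ω | T ω ∨ inTopQ q Z (Finset.Icc (m - (r + 1) + 1) (2 * m - (r + 1))) m ω}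
        {ω | T ω ∨ inTopQ q Z (Finset.Icc (m - r + 1) (2 * m - r)) m ω})
      ≤ 2 * ((q : ℝ) / (((m : ℝ) + 1) * (m : ℝ))) := by
  set S := Finset.Icc (m - r) (2 * m - r) with hS
  have hcard : Fintype.card S = m + 1 := by
    simp [hS]; omega
  let i : S := ⟨m, by simp [hS]; omega⟩
  let a : S := ⟨m - r, by simp [hS]; omega⟩
  let b : S := ⟨2 * m - r, by simp [hS]; omega⟩
  have hia : i ≠ a := by simp [i, a, Subtype.ext_iff]; omega
  have hib : i ≠ b := by simp [i, b, Subtype.ext_iff]; omega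
  have hbound := aux_iid P μ hCont (fun c : S => Z c) (fun c => hZmeas c)
    (hIndep.precomp Subtype.val_injective) (fun c => hDist c) q i
  have h1 := hbound a hia
  have h2 := hbound b hib
  rw [hcard] at h1 h2
  push_cast at h1 h2
  rw [add_sub_cancel_right] at h1 h2
  have hsub : symmDiff
        {ω | T ω ∨ inTopQ q Z (Finset.Icc (m - (r + 1) + 1) (2 * m - (r + 1))) m ω}
        {ω | T ω ∨ inTopQ q Z (Finset.Icc (m - r + 1) (2 * m - r)) m ω} ⊆
      {ω | (fun c : S => Z c ω) ∈ auxE q i a} ∪ {ω | (fun c : S => Z c ω) ∈ auxE q i b} := by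
    intro ω hω
    have hcS : (Finset.univ.filter fun c : S => Z m ω < Z c ω).card =
        (S.filter fun c => Z m ω < Z c ω).card := by
      rw [← Finset.card_map (Function.Embedding.subtype _)]
      congr 1
      ext c; simp [and_comm]
    have ea : insert (m - r) (Finset.Icc (m - r + 1) (2 * m - r)) = S := by
      ext c; simp [hS]; omega
    have eb : insert (2 * m - r) (Finset.Icc (m - (r + 1) + 1) (2 * m - (r + 1))) = S := by
      ext c; simp [hS]; omega
    have ca : (S.filter fun c => Z m ω < Z c ω).card =
        ((Finset.Icc (m - r + 1) (2 * m - r)).filter fun c => Z m ω < Z c ω).card +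
          if Z m ω < Z (m - r) ω then 1 else 0 := by
      rw [← ea, Finset.card_filter, Finset.card_filter, Finset.sum_insert (by simp), add_comm]
    have cb : (S.filter fun c => Z m ω < Z c ω).card =
        ((Finset.Icc (m - (r + 1) + 1) (2 * m - (r + 1))).filter fun c => Z m ω < Z c ω).card +
          if Z m ω < Z (2 * m - r) ω then 1 else 0 := by
      rw [← eb, Finset.card_filter, Finset.card_filter,
        Finset.sum_insert (by simp; omega), add_comm]
    simp only [Set.mem_symmDiff, Set.mem_ofPred_eq, inTopQ] at hω
    simp only [Set.mem_union, Set.mem_ofPred_eq, auxE, i, a, b]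
    rw [hcS]
    by_cases p1 : Z m ω < Z (m - r) ω <;> by_cases p2 : Z m ω < Z (2 * m - r) ω <;>
      simp only [p1, p2, if_true, if_false, and_true, and_false, or_false, false_or, or_self] at ca cb ⊢ <;> 
      rcases hω with ⟨h | h, h'⟩ | ⟨h | h, h'⟩ <;> (push Not at h') <;> first | exact absurd h h'.1 | omega
  calc _ ≤ _ := measureReal_mono hsub
    _ ≤ _ := measureReal_union_le _ _
    _ ≤ _ := by linarith

/-- Lemma: difference of the indicators.
For iid random variables with a continuous (atomless) common distribution,
`E[|1_{m,ℓ,m} - 1_{m,1,m}|] ≤ (q+1)q(ℓ-1)/((m+1)m)`; here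
`E[|1_A - 1_B|] = P(A Δ B)`. -/
theorem indicator_difference_bound
    {Ω : Type*} [MeasurableSpace Ω] (P : Measure Ω) [IsProbabilityMeasure P]
    (q ℓ m : ℕ) (hq : 1 ≤ q) (hℓ : 2 ≤ ℓ) (hm : ℓ + q ≤ m)
    (Z : ℕ → Ω → ℝ) (hZmeas : ∀ i, Measurable (Z i))
    (hIndep : iIndepFun Z P)
    (μ : Measure ℝ) (hDist : ∀ i, Measure.map (Z i) P = μ)
    (hCont : ∀ x : ℝ, μ {x} = 0) :
    (P (symmDiff
        {ω | inTopQ q Z (Finset.Icc 1 m) m ω ∨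
            inTopQ q Z (Finset.Icc (m - ℓ + 1) (2 * m - ℓ)) m ω}
        {ω | inTopQ q Z (Finset.Icc 1 m) m ω ∨
            inTopQ q Z (Finset.Icc (m - 1 + 1) (2 * m - 1)) m ω})).toReal
      ≤ ((q : ℝ) + 1) * (q : ℝ) * ((ℓ : ℝ) - 1) / (((m : ℝ) + 1) * (m : ℝ)) := by
  set c : ℝ := 2 * ((q : ℝ) / (((m : ℝ) + 1) * (m : ℝ))) with hc
  have key : ∀ k : ℕ, k < m → P.real (symmDiff
        {ω | inTopQ q Z (Finset.Icc 1 m) m ω ∨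
            inTopQ q Z (Finset.Icc (m - (k + 1) + 1) (2 * m - (k + 1))) m ω}
        {ω | inTopQ q Z (Finset.Icc 1 m) m ω ∨
            inTopQ q Z (Finset.Icc (m - 1 + 1) (2 * m - 1)) m ω}) ≤ k * c := by
    intro k
    induction k with
    | zero => intro _; simp
    | succ k ih =>
      intro hk
      have h1 := ih (by omega)
      have h2 := aux_step P q m (k + 1) (by omega) hk Z hZmeas hIndep μ hDist hCont
        (fun ω => inTopQ q Z (Finset.Icc 1 m) m ω)
      refine (measureReal_symmDiff_le _ (measure_ne_top _ _) (measure_ne_top _ _)).trans ((add_le_add h2 h1).trans (le_of_eq ?_))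
      push_cast; ring
  have h := key (ℓ - 1) (by omega)
  rw [show ℓ - 1 + 1 = ℓ by omega] at h
  refine h.trans ?_
  rw [Nat.cast_sub (by omega), hc]
  have hq' : (1 : ℝ) ≤ q := by exact_mod_cast hq
  have hl' : (2 : ℝ) ≤ ℓ := by exact_mod_cast hℓ
  have hd : 0 ≤ (((m : ℝ) + 1) * (m : ℝ)) := by positivity
  rw [← mul_div_assoc, ← mul_div_assoc]
  refine div_le_div_of_nonneg_right ?_ hd
  push_cast
  nlinarith [mul_nonneg (mul_nonneg (sub_nonneg.2 hq') (by linarith : (0:ℝ) ≤ q)) (by linarith : (0:ℝ) ≤ (ℓ:ℝ) - 1)]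

end
end

section
/- Let q ≥ 1 be an integer and let ν < q be a real number. Let Y*_1,…,Y*_m be iid standard Pareto(1) random variables with ascending order statistics Y*_{1:m} ≤ … ≤ Y*_{m:m}. Then there exists an integer m_0 (depending on q and ν) such that the family {(Y*_{m−q+1:m}/m)^ν : m ≥ m_0} is uniformly integrable. -/
open MeasureTheory ProbabilityTheory Filter Real Set Topology
open scoped ENNReal NNReal Classical

noncomputable section

lemma aux_descStat {m : ℕ} (x : Fin m → ℝ) (q : ℕ) (hq : 1 ≤ q) (hm : q ≤ m) (p : ℝ → Prop)
    (hp : ∀ a b, a ≤ b → p a → p b) :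
    p (descStat x (q - 1)) ↔ ∃ S ∈ Finset.powersetCard q (Finset.univ : Finset (Fin m)),
      ∀ i ∈ S, p (x i) := by
  have h : q - 1 < m := by omega
  have hmono := Tuple.monotone_sort x
  simp only [descStat, dif_pos h]
  constructor
  · intro hx
    refine ⟨(Finset.Ici (⟨m - 1 - (q - 1), by omega⟩ : Fin m)).map
      (Tuple.sort x).toEmbedding, ?_, ?_⟩
    · simp only [Finset.mem_powersetCard, Finset.subset_univ, true_and, Finset.card_map,
        Fin.card_Ici]
      omega
    · intro i hi
      simp only [Finset.mem_map, Finset.mem_Ici] at hi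
      obtain ⟨k, hk, rfl⟩ := hi
      exact hp _ _ (hmono hk) hx
  · rintro ⟨S, hS, hSp⟩
    by_contra hx
    have hsub : S ⊆ (Finset.Ioi (⟨m - 1 - (q - 1), by omega⟩ : Fin m)).map
      (Tuple.sort x).toEmbedding := by
      intro i hi
      simp only [Finset.mem_map, Finset.mem_Ioi]
      refine ⟨(Tuple.sort x).symm i, ?_, by simp⟩
      by_contra hlt
      have h1 := hmono (not_lt.mp hlt)
      refine hx (hp _ _ h1 ?_)
      simpa using hSp i hi
    have h2 := Finset.card_le_card hsub
    rw [(Finset.mem_powersetCard.mp hS).2, Finset.card_map, Fin.card_Ioi] at h2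
    simp only at h2
    omega

lemma aux_descStat_meas {Ω : Type*} [MeasurableSpace Ω] (Y : ℕ → Ω → ℝ)
    (hYmeas : ∀ i, Measurable (Y i)) (q m : ℕ) (hq : 1 ≤ q) (hm : q ≤ m) :
    Measurable (fun ω => descStat (fun i : Fin m => Y i ω) (q - 1)) := by
  refine measurable_of_Ici fun t => ?_
  have : (fun ω => descStat (fun i : Fin m => Y i ω) (q - 1)) ⁻¹' Ici t =
      ⋃ S ∈ Finset.powersetCard q (Finset.univ : Finset (Fin m)), ⋂ i ∈ S, (Y i) ⁻¹' Ici t := by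
    ext ω
    have := aux_descStat (fun i : Fin m => Y i ω) q hq hm (fun a => t ≤ a)
      (fun a b h1 h2 => h2.trans h1)
    simpa using this
  rw [this]
  refine Finset.measurableSet_biUnion _ fun S _ => Finset.measurableSet_biInter _ fun i _ => ?_
  exact hYmeas i measurableSet_Ici

lemma aux_pareto_Ici {t : ℝ} (ht : 0 < t) : pareto1 (Ici t) ≤ ENNReal.ofReal t⁻¹ := by
  rcases lt_or_ge t 1 with h | h
  · refine prob_le_one.trans ?_
    rw [← ENNReal.ofReal_one]
    exact ENNReal.ofReal_le_ofReal ((one_le_inv₀ ht).2 h.le)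
  · rw [pareto1, paretoMeasure, withDensity_apply _ measurableSet_Ici]
    have h1 : ∫⁻ x in Ici t, paretoPDF 1 1 x = ∫⁻ x in Ici t, ENNReal.ofReal (x ^ (-2 : ℝ)) := by
      refine setLIntegral_congr_fun measurableSet_Ici fun x hx => ?_
      rw [paretoPDF_of_le (h.trans hx)]
      norm_num
    rw [h1, setLIntegral_congr Ioi_ae_eq_Ici.symm, ← ofReal_integral_eq_lintegral_ofReal,
      integral_Ioi_rpow_of_lt (by norm_num) ht]
    · norm_num [Real.rpow_neg_one]
    · exact integrableOn_Ioi_rpow_of_lt (by norm_num) ht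
    · refine (ae_restrict_iff' measurableSet_Ioi).2 (ae_of_all _ fun x hx => ?_)
      have : 0 < x := ht.trans hx
      simp only [Pi.zero_apply]; positivity

lemma aux_pareto_Iio_one : pareto1 (Iio 1) = 0 := by
  rw [pareto1, paretoMeasure, withDensity_apply _ measurableSet_Iio]
  exact lintegral_paretoPDF_of_le le_rfl

lemma aux_pareto_Iic {t : ℝ} (ht : 0 < t) :
    pareto1 (Iic t) ≤ ENNReal.ofReal (Real.exp (-t⁻¹)) := by
  rcases lt_or_ge t 1 with h | h
  · refine (measure_mono (fun x hx => ?_ : Iic t ⊆ Iio 1)).trans (aux_pareto_Iio_one.le.trans ?_)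
    · exact lt_of_le_of_lt hx h
    · simp
  · have h0 : pareto1 (Ioi t) = ENNReal.ofReal t⁻¹ := by
      rw [pareto1, paretoMeasure, withDensity_apply _ measurableSet_Ioi]
      have h1 : ∫⁻ x in Ioi t, paretoPDF 1 1 x = ∫⁻ x in Ioi t, ENNReal.ofReal (x ^ (-2 : ℝ)) := by
        refine setLIntegral_congr_fun measurableSet_Ioi fun x hx => ?_
        rw [paretoPDF_of_le (h.trans (le_of_lt hx))]
        norm_num
      rw [h1, ← ofReal_integral_eq_lintegral_ofReal,
        integral_Ioi_rpow_of_lt (by norm_num) ht]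
      · norm_num [Real.rpow_neg_one]
      · exact integrableOn_Ioi_rpow_of_lt (by norm_num) ht
      · refine (ae_restrict_iff' measurableSet_Ioi).2 (ae_of_all _ fun x hx => ?_)
        have : 0 < x := ht.trans hx
        simp only [Pi.zero_apply]; positivity
    have h2 : pareto1 (Iic t) = 1 - ENNReal.ofReal t⁻¹ := by
      rw [← h0, ← compl_Ioi]; exact prob_compl_eq_one_sub measurableSet_Ioi
    rw [h2, ← ENNReal.ofReal_one, ← ENNReal.ofReal_sub _ (by positivity)]
    refine ENNReal.ofReal_le_ofReal ?_
    have := Real.add_one_le_exp (-t⁻¹)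
    linarith

lemma aux_upper {Ω : Type*} [MeasurableSpace Ω] (P : Measure Ω) [IsProbabilityMeasure P]
    (q : ℕ) (hq : 1 ≤ q) (Y : ℕ → Ω → ℝ) (hYmeas : ∀ i, Measurable (Y i))
    (hIndep : iIndepFun Y P) (hDist : ∀ i, Measure.map (Y i) P = pareto1)
    (m : ℕ) (hm : q ≤ m) (u : ℝ) (hu : 0 < u) :
    P {ω | u ≤ descStat (fun i : Fin m => Y i ω) (q - 1) / m} ≤ ENNReal.ofReal ((u⁻¹) ^ q) := by
  have hm0 : (0 : ℝ) < m := by exact_mod_cast (by omega : 0 < m)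
  set t : ℝ := u * m with ht
  have ht0 : 0 < t := by positivity
  have hsub : {ω | u ≤ descStat (fun i : Fin m => Y i ω) (q - 1) / m} ⊆
      ⋃ S ∈ Finset.powersetCard q (Finset.range m), ⋂ i ∈ S, (Y i) ⁻¹' Ici t := by
    intro ω hω
    rw [mem_ofPred_eq, le_div_iff₀ hm0] at hω
    obtain ⟨S, hS, hS2⟩ := (aux_descStat (fun i : Fin m => Y i ω) q hq hm (fun a => t ≤ a)
      (fun a b h1 h2 => h2.trans h1)).1 hω
    simp only [mem_iUnion, mem_iInter]
    refine ⟨S.map Fin.valEmbedding, ?_, ?_⟩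
    · rw [Finset.mem_powersetCard] at hS ⊢
      refine ⟨?_, by simpa using hS.2⟩
      intro i hi
      simp only [Finset.mem_map] at hi
      obtain ⟨k, -, rfl⟩ := hi
      simp
    · intro i hi
      simp only [Finset.mem_map] at hi
      obtain ⟨k, hk, rfl⟩ := hi
      exact hS2 k hk
  refine (measure_mono hsub).trans ((measure_biUnion_finset_le _ _).trans ?_)
  have hS : ∀ S ∈ Finset.powersetCard q (Finset.range m),
      P (⋂ i ∈ S, (Y i) ⁻¹' Ici t) ≤ ENNReal.ofReal (t⁻¹ ^ q) := by
    intro S hS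
    rw [hIndep.measure_inter_preimage_eq_mul S (fun _ _ => measurableSet_Ici)]
    rw [ENNReal.ofReal_pow (by positivity), ← (Finset.mem_powersetCard.mp hS).2]
    refine Finset.prod_le_pow_card _ _ _ fun i _ => ?_
    rw [← Measure.map_apply (hYmeas i) measurableSet_Ici, hDist]
    exact aux_pareto_Ici ht0
  refine (Finset.sum_le_sum hS).trans ?_
  rw [Finset.sum_const, Finset.card_powersetCard, Finset.card_range, nsmul_eq_mul,
    ← ENNReal.ofReal_natCast, ← ENNReal.ofReal_mul (by positivity)]
  refine ENNReal.ofReal_le_ofReal ?_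
  have h1 : ((m.choose q : ℕ) : ℝ) ≤ (m : ℝ) ^ q := by exact_mod_cast Nat.choose_le_pow m q
  calc ((m.choose q : ℕ) : ℝ) * t⁻¹ ^ q ≤ (m : ℝ) ^ q * t⁻¹ ^ q := by gcongr
    _ = u⁻¹ ^ q := by rw [← mul_pow, ht]; congr 1; field_simp

lemma aux_lower {Ω : Type*} [MeasurableSpace Ω] (P : Measure Ω) [IsProbabilityMeasure P]
    (q : ℕ) (hq : 1 ≤ q) (Y : ℕ → Ω → ℝ) (hYmeas : ∀ i, Measurable (Y i))
    (hIndep : iIndepFun Y P) (hDist : ∀ i, Measure.map (Y i) P = pareto1)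
    (m : ℕ) (hm : q ≤ m) (u : ℝ) (hu : 0 < u) :
    P {ω | descStat (fun i : Fin m => Y i ω) (q - 1) / m ≤ u} ≤
      ENNReal.ofReal (q * Real.exp (-(2 * q * u)⁻¹)) := by
  have hm0 : (0 : ℝ) < m := by exact_mod_cast (by omega : 0 < m)
  have hq0 : (0 : ℝ) < q := by exact_mod_cast (by omega : 0 < q)
  set t : ℝ := u * m with ht
  have ht0 : 0 < t := by positivity
  set k := m / q with hk
  have hkq : k * q ≤ m := Nat.div_mul_le_self m q
  have hk2 : m ≤ 2 * q * k := by
    have h1 : 1 ≤ k := (Nat.one_le_div_iff (by omega)).2 hm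
    have h2 : m < q * (k + 1) := by
      rw [hk]; exact Nat.lt_mul_div_succ m (by omega)
    nlinarith
  have hsub : {ω | descStat (fun i : Fin m => Y i ω) (q - 1) / m ≤ u} ⊆
      ⋃ j ∈ Finset.range q, ⋂ i ∈ Finset.Ico (j * k) ((j + 1) * k), (Y i) ⁻¹' Iic t := by
    intro ω hω
    rw [mem_ofPred_eq, div_le_iff₀ hm0] at hω
    by_contra hcon
    simp only [mem_iUnion, mem_iInter, not_exists, not_forall, Finset.mem_range, mem_preimage,
      mem_Iic, not_le, Finset.mem_Ico] at hcon
    choose f hf hf2 using hcon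
    have hfm : ∀ j (hj : j < q), f j hj < m := fun j hj => by
      have := (hf j hj).2
      have h3 : (j + 1) * k ≤ q * k := Nat.mul_le_mul_right _ hj
      nlinarith
    have hinj : Function.Injective (fun j : Fin q => (⟨f j j.2, hfm j j.2⟩ : Fin m)) := by
      intro a b hab
      simp only [Fin.mk.injEq] at hab
      have ha := hf a a.2
      have hb := hf b b.2
      rw [hab] at ha
      have key : ∀ a b y : ℕ, a * k ≤ y → y < (b + 1) * k → a ≤ b := by
        intro a b y h1 h2
        exact Nat.lt_succ_iff.1 (lt_of_mul_lt_mul_right (h1.trans_lt h2) (Nat.zero_le k))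
      exact Fin.ext (le_antisymm (key _ _ _ ha.1 hb.2) (key _ _ _ hb.1 ha.2))
    have := (aux_descStat (fun i : Fin m => Y i ω) q hq hm (fun a => t < a)
      (fun a b h1 h2 => h2.trans_le h1)).2
      ⟨Finset.univ.map ⟨_, hinj⟩, by simp [Finset.mem_powersetCard], by
        intro i hi
        simp only [Finset.mem_map] at hi
        obtain ⟨j, -, rfl⟩ := hi
        exact hf2 j j.2⟩
    exact absurd hω (not_le.2 this)
  refine (measure_mono hsub).trans ((measure_biUnion_finset_le _ _).trans ?_)
  have hS : ∀ j ∈ Finset.range q,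
      P (⋂ i ∈ Finset.Ico (j * k) ((j + 1) * k), (Y i) ⁻¹' Iic t) ≤
        ENNReal.ofReal (Real.exp (-t⁻¹) ^ k) := by
    intro j hj
    rw [hIndep.measure_inter_preimage_eq_mul _ (fun _ _ => measurableSet_Iic)]
    have hc : (Finset.Ico (j * k) ((j + 1) * k)).card = k := by
      rw [Nat.card_Ico, add_mul]; omega
    rw [ENNReal.ofReal_pow (by positivity)]
    nth_rewrite 3 [← hc]
    refine Finset.prod_le_pow_card _ _ _ fun i _ => ?_
    rw [← Measure.map_apply (hYmeas i) measurableSet_Iic, hDist]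
    exact aux_pareto_Iic ht0
  refine (Finset.sum_le_sum hS).trans ?_
  rw [Finset.sum_const, Finset.card_range, nsmul_eq_mul,
    ← ENNReal.ofReal_natCast, ← ENNReal.ofReal_mul (by positivity)]
  refine ENNReal.ofReal_le_ofReal ?_
  rw [← Real.exp_nat_mul]
  have hk3 : (m : ℝ) ≤ 2 * q * k := by exact_mod_cast hk2
  have : (2 * q * u)⁻¹ ≤ k * t⁻¹ := by
    rw [inv_eq_one_div, ← div_eq_mul_inv, div_le_div_iff₀ (by positivity) ht0, ht]
    nlinarith
  gcongr
  linarith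

lemma aux_exp {N y : ℝ} (hN : 0 < N) (hy : 0 < y) : Real.exp (-y) ≤ N ^ N * y ^ (-N) := by
  have h1 : y / N ≤ Real.exp (y / N) := by linarith [Real.add_one_le_exp (y / N)]
  have h2 : (y / N) ^ N ≤ Real.exp y := by
    refine (Real.rpow_le_rpow (by positivity) h1 hN.le).trans_eq ?_
    rw [← Real.exp_mul]; congr 1; field_simp
  rw [Real.exp_neg, Real.rpow_neg hy.le, ← div_eq_mul_inv, inv_eq_one_div,
    div_le_div_iff₀ (by positivity) (by positivity)]
  rw [Real.div_rpow hy.le hN.le, div_le_iff₀ (by positivity)] at h2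
  linarith

lemma aux_ui {Ω ι : Type*} [MeasurableSpace Ω] (P : Measure Ω) [IsProbabilityMeasure P]
    (f : ι → Ω → ℝ) (hf : ∀ i, Measurable (f i)) (C r : ℝ) (hC : 0 ≤ C) (hr : 1 < r)
    (h : ∀ i, ∀ s : ℝ, 0 < s → P {ω | s ≤ |f i ω|} ≤ ENNReal.ofReal (C * s ^ (-r))) :
    UniformIntegrable f 1 P := by
  refine uniformIntegrable_of le_rfl ENNReal.one_ne_top
    (fun i => (hf i).aestronglyMeasurable) fun ε hε => ?_
  have hlim : Tendsto (fun c : ℝ => C * (1 + 1 / (r - 1)) * c ^ (-(r - 1))) atTop (𝓝 0) := by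
    simpa using (tendsto_rpow_neg_atTop (by linarith : 0 < r - 1)).const_mul
      (C * (1 + 1 / (r - 1)))
  obtain ⟨c, hc, hc0⟩ := ((hlim.eventually_le_const hε).and (eventually_gt_atTop 0)).exists
  refine ⟨c.toNNReal, fun i => ?_⟩
  set A := {x | c.toNNReal ≤ ‖f i x‖₊} with hA
  have hAe : A = {x | c ≤ |f i x|} := by
    ext x; rw [hA, mem_ofPred_eq, mem_ofPred_eq, ← NNReal.coe_le_coe]; simp [hc0.le]
  have hAm : MeasurableSet A := by
    rw [hAe]; exact measurableSet_le measurable_const (hf i).abs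
  rw [eLpNorm_one_eq_lintegral_enorm]
  have e1 : ∀ x, ‖A.indicator (f i) x‖ₑ = ENNReal.ofReal |A.indicator (f i) x| := fun x =>
    Real.enorm_eq_ofReal_abs _
  simp_rw [e1]
  rw [lintegral_eq_lintegral_meas_le P (ae_of_all _ fun x => abs_nonneg _)
    (((hf i).indicator hAm).abs).aemeasurable]
  rw [← Ioc_union_Ioi_eq_Ioi hc0.le, lintegral_union measurableSet_Ioi (by
    rw [Set.disjoint_left]; intro x hx hx2; exact absurd hx.2 (not_le.2 hx2))]
  have hb1 : ∀ t : ℝ, 0 < t → P {a | t ≤ |A.indicator (f i) a|} ≤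
      ENNReal.ofReal (C * c ^ (-r)) := by
    intro t ht
    refine (measure_mono fun x hx => ?_).trans (h i c hc0)
    by_cases hxA : x ∈ A
    · rw [hAe] at hxA; exact hxA
    · simp only [mem_ofPred_eq, indicator_of_notMem hxA, abs_zero] at hx
      exact absurd ht (not_lt.2 hx)
  have hb2 : ∀ t : ℝ, 0 < t → P {a | t ≤ |A.indicator (f i) a|} ≤
      ENNReal.ofReal (C * t ^ (-r)) := by
    intro t ht
    refine (measure_mono fun x hx => ?_).trans (h i t ht)
    by_cases hxA : x ∈ A
    · simpa [indicator_of_mem hxA] using hx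
    · simp only [mem_ofPred_eq, indicator_of_notMem hxA, abs_zero] at hx
      exact absurd ht (not_lt.2 hx)
  have i1 : ∫⁻ t in Ioc 0 c, P {a | t ≤ |A.indicator (f i) a|} ≤
      ENNReal.ofReal (C * c ^ (-(r - 1))) := by
    refine (setLIntegral_mono measurable_const fun t ht => hb1 t ht.1).trans ?_
    rw [setLIntegral_const, Real.volume_Ioc, ← ENNReal.ofReal_mul (by positivity), sub_zero,
      mul_assoc, ← Real.rpow_add_one hc0.ne']
    apply le_of_eq; congr 3; ring
  have i2 : ∫⁻ t in Ioi c, P {a | t ≤ |A.indicator (f i) a|} ≤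
      ENNReal.ofReal (C * (c ^ (-(r - 1)) / (r - 1))) := by
    refine (setLIntegral_mono (by fun_prop) fun t ht => hb2 t (hc0.trans (mem_Ioi.1 ht))).trans ?_
    rw [← ofReal_integral_eq_lintegral_ofReal, integral_const_mul,
      integral_Ioi_rpow_of_lt (by linarith) hc0]
    · apply le_of_eq; congr 2
      rw [show -r + 1 = -(r - 1) by ring, neg_div_neg_eq]
    · exact (integrableOn_Ioi_rpow_of_lt (by linarith) hc0).const_mul C
    · refine (ae_restrict_iff' measurableSet_Ioi).2 (ae_of_all _ fun x hx => ?_)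
      have : 0 < x := hc0.trans hx
      simp only [Pi.zero_apply]; positivity
  refine (add_le_add i1 i2).trans ?_
  have : 0 < r - 1 := by linarith
  rw [← ENNReal.ofReal_add (by positivity) (by positivity)]
  refine ENNReal.ofReal_le_ofReal (le_trans (le_of_eq ?_) hc)
  ring

/-- Lemma: uniform integrability of powers of Pareto order statistics.
For `q ≥ 1` and `ν < q`, the family `{(Y*_{m-q+1:m}/m)^ν : m ≥ m₀}` is uniformly
integrable for some `m₀` (depending on `q` and `ν`); here `Y*_{m-q+1:m}` is the `q`-th
largest of `m` iid standard Pareto(1) random variables. -/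
theorem pareto_order_statistic_uniformly_integrable
    {Ω : Type*} [MeasurableSpace Ω] (P : Measure Ω) [IsProbabilityMeasure P]
    (q : ℕ) (hq : 1 ≤ q) (ν : ℝ) (hν : ν < (q : ℝ))
    (Y : ℕ → Ω → ℝ) (hYmeas : ∀ i, Measurable (Y i))
    (hIndep : iIndepFun Y P)
    (hDist : ∀ i, Measure.map (Y i) P = pareto1) :
    ∃ m₀ : ℕ, UniformIntegrable
      (fun (m : {i : ℕ // m₀ ≤ i}) ω =>
        (descStat (fun i : Fin (m : ℕ) => Y i ω) (q - 1) / ((m : ℕ) : ℝ)) ^ ν)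
      1 P := by
  have hq0 : (0 : ℝ) < q := by exact_mod_cast (by omega : 0 < q)
  have hY1 : ∀ᵐ ω ∂P, ∀ i, 1 ≤ Y i ω := by
    rw [ae_all_iff]; intro i
    have : P ((Y i) ⁻¹' Iio 1) = 0 := by
      rw [← Measure.map_apply (hYmeas i) measurableSet_Iio, hDist]; exact aux_pareto_Iio_one
    rw [ae_iff]
    simpa [preimage, not_le] using this
  have hpos : ∀ m : ℕ, q ≤ m → ∀ᵐ ω ∂P,
      0 < descStat (fun i : Fin m => Y i ω) (q - 1) / (m : ℝ) := by
    intro m hm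
    have hm0 : (0 : ℝ) < m := by exact_mod_cast (by omega : 0 < m)
    filter_upwards [hY1] with ω hω
    refine div_pos ?_ hm0
    rw [descStat, dif_pos (by omega)]
    exact zero_lt_one.trans_le (hω _)
  refine ⟨q, ?_⟩
  have hmeas : ∀ m : {i : ℕ // q ≤ i}, Measurable fun ω =>
      (descStat (fun i : Fin (m : ℕ) => Y i ω) (q - 1) / ((m : ℕ) : ℝ)) ^ ν := fun m =>
    ((aux_descStat_meas Y hYmeas q m hq m.2).div_const _).pow_const ν
  rcases lt_trichotomy ν 0 with h | h | h
  · refine aux_ui P _ hmeas (q * ((-2 * ν) ^ (-2 * ν) * (2 * q) ^ (-2 * ν))) 2 ?_ one_lt_two ?_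
    · have : 0 < -2 * ν := by linarith
      positivity
    · intro m s hs
      have hN : 0 < -2 * ν := by linarith
      have hu : 0 < s ^ ν⁻¹ := by positivity
      refine (measure_mono_ae ?_).trans ((aux_lower P q hq Y hYmeas hIndep hDist m m.2
        (s ^ ν⁻¹) hu).trans (ENNReal.ofReal_le_ofReal ?_))
      · filter_upwards [hpos m m.2] with ω hω hs2
        change s ≤ |_| at hs2
        rw [abs_of_pos (Real.rpow_pos_of_pos hω ν)] at hs2
        change _ ≤ _
        have := Real.rpow_le_rpow_of_nonpos hs hs2 (inv_nonpos.2 h.le)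
        rwa [Real.rpow_rpow_inv hω.le h.ne] at this
      · rw [mul_assoc (q : ℝ) (_ * _) _]
        refine mul_le_mul_of_nonneg_left ?_ hq0.le
        refine (aux_exp hN (by positivity)).trans (le_of_eq ?_)
        rw [mul_assoc (_ ^ _)]
        congr 1
        rw [Real.inv_rpow (by positivity), Real.rpow_neg (by positivity), inv_inv,
          Real.mul_rpow (by positivity) hu.le, ← Real.rpow_mul hs.le]
        congr 2
        have := h.ne
        field_simp
  · subst h
    refine aux_ui P _ hmeas 1 2 zero_le_one one_lt_two ?_
    intro m s hs
    simp only [Real.rpow_zero, abs_one]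
    by_cases hs1 : s ≤ 1
    · refine prob_le_one.trans ?_
      rw [← ENNReal.ofReal_one]
      refine ENNReal.ofReal_le_ofReal ?_
      rw [one_mul]
      exact Real.one_le_rpow_of_pos_of_le_one_of_nonpos hs hs1 (by norm_num)
    · simp [hs1]
  · refine aux_ui P _ hmeas 1 (q / ν) zero_le_one ((one_lt_div h).2 hν) ?_
    intro m s hs
    have hu : 0 < s ^ ν⁻¹ := by positivity
    refine (measure_mono_ae ?_).trans ((aux_upper P q hq Y hYmeas hIndep hDist m m.2
        (s ^ ν⁻¹) hu).trans (ENNReal.ofReal_le_ofReal ?_))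
    · filter_upwards [hpos m m.2] with ω hω hs2
      change s ≤ |_| at hs2
      rw [abs_of_pos (Real.rpow_pos_of_pos hω ν)] at hs2
      change _ ≤ _
      have := Real.rpow_le_rpow hs.le hs2 (inv_nonneg.2 h.le)
      rwa [Real.rpow_rpow_inv hω.le h.ne'] at this
    · rw [one_mul, ← Real.rpow_natCast, ← Real.rpow_neg hs.le, ← Real.rpow_mul hs.le]
      apply le_of_eq; congr 1
      field_simp

end
end
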